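/- arXiv:math/9909142 — 2 statements merged into one kernel-verified Lean document; each statement's English description precedes it below -/
import Mathlib

section
/- Weil descent for affine schemes (algebraic form): Let k be a field of characteristic zero and K an algebraically closed field extension of k of infinite transcendence degree over k. Let R be a finitely generated commutative K-algebra equipped with a continuous semilinear action of Aut(K/k). Then the subring R₀ of elements of R fixed by every σ ∈ Aut(K/k) spans R as a K-vector space, and R₀ is a finitely generated k-algebra. -/
/-
By continuity, `R` is spanned over `K` by vectors fixed by `Aut(K/L)` for some finitely generated
`L`, and it suffices to remove the generators of `L` one at a time, passing from `F(x)` to `F`.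
A vector `w` fixed by `Aut(K/F(x))` extends to an `Aut(K/F)`-equivariant family `W` on the orbit
of `x`, with `W x = w`.

If `x` is algebraic over `F`, its orbit is finite, the power sums `∑ yⁿ • W y` over the orbit are
invariant, and interpolation at `x` recovers `w` from them. If `x` is transcendental, its orbit
consists of all elements transcendental over `F`. Taking `y` transcendental over `M = F(x)` and
expanding `W y` in a basis of `M`-fixed vectors shows that `W` is rational on generic points. The
ideal of denominators of `W` is stable under `Aut(K/F)`, hence its monic generator `h` is
invariant; so then are the coefficients of the polynomial `h • W`, and `W z` is a combination of
invariant vectors for generic `z`. Equivariance carries this back from `z` to `x`.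

Finally, coordinates of an invariant element in a basis of invariant monomials are invariant
scalars, that is, elements of `k`.
-/

open Polynomial MulAction Filter IntermediateField

universe u

namespace WeilDescent

section SemilinearAction

variable {G K V : Type*} [Group G]

theorem exists_equivariant_extension {X Y : Type*} [MulAction G X] [MulAction G Y] {x : X} {y : Y}
    (h : stabilizer G x ≤ stabilizer G y) : ∃ f : X → Y, ∀ g : G, f (g • x) = g • y := by
  classical
  refine ⟨fun z ↦ if hz : ∃ g : G, g • x = z then hz.choose • y else y, fun g ↦ ?_⟩
  have hg : ∃ g' : G, g' • x = g • x := ⟨g, rfl⟩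
  have hmem : g⁻¹ * hg.choose ∈ stabilizer G y :=
    h (by rw [mem_stabilizer_iff, mul_smul, hg.choose_spec, inv_smul_smul])
  simpa only [hg, dite_true, mem_stabilizer_iff, mul_smul, inv_smul_eq_iff] using hmem

variable [Field K] [MulSemiringAction G K] [AddCommGroup V] [Module K V] [DistribMulAction G V]
  [SMulDistribClass G K V]

theorem smul_mem_span_fixedPoints (g : G) {v : V}
    (hv : v ∈ Submodule.span K (fixedPoints G V)) :
    g • v ∈ Submodule.span K (fixedPoints G V) := by
  induction hv using Submodule.span_induction with
  | mem v hv => exact Submodule.subset_span (by rwa [hv g])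
  | zero => simp
  | add v w _ _ hv hw => simpa only [smul_add] using add_mem hv hw
  | smul c v _ hv => simpa only [smul_distrib_smul] using Submodule.smul_mem _ _ hv

theorem smul_mem_span_fixedPoints_iff (g : G) {v : V} :
    g • v ∈ Submodule.span K (fixedPoints G V) ↔ v ∈ Submodule.span K (fixedPoints G V) :=
  ⟨fun h ↦ by simpa using smul_mem_span_fixedPoints g⁻¹ h, smul_mem_span_fixedPoints g⟩

theorem repr_smul_of_mem_fixedPoints {ι : Type*} (e : Module.Basis ι K V)
    (he : ∀ i, e i ∈ fixedPoints G V) (g : G) (v : V) (i : ι) :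
    e.repr (g • v) i = g • e.repr v i := by
  have key : g • v = Finsupp.linearCombination K e ((e.repr v).mapRange (g • ·) (smul_zero g)) := by
    conv_lhs => rw [← e.linearCombination_repr v]
    simp [Finsupp.linearCombination_apply, Finsupp.sum_mapRange_index, Finsupp.smul_sum,
      smul_distrib_smul, he _ g]
  rw [key, e.repr_linearCombination, Finsupp.mapRange_apply]

section FiniteOrbit

theorem sum_pow_smul_mem_fixedPoints {x : K} {w : V} {W : K → V} {s : Finset K}
    (hs : (s : Set K) = orbit G x) (hW : ∀ g : G, W (g • x) = g • w) (n : ℕ) :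
    ∑ y ∈ s, y ^ n • W y ∈ fixedPoints G V := by
  have hmem (y : K) : y ∈ s ↔ y ∈ orbit G x := by rw [← hs, Finset.mem_coe]
  have hW' (g : G) {y : K} (hy : y ∈ s) : g • W y = W (g • y) := by
    obtain ⟨a, rfl⟩ := (hmem y).1 hy
    simp only [← mul_smul, hW]
  intro g
  rw [Finset.smul_sum]
  refine Finset.sum_equiv (MulAction.toPerm g) (fun y ↦ ?_) fun y hy ↦ ?_
  · rw [hmem, hmem, MulAction.toPerm_apply, ← smul_orbit g x, Set.smul_mem_smul_set_iff, smul_orbit]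
  · rw [smul_distrib_smul, smul_pow', hW' g hy, MulAction.toPerm_apply]

theorem mem_span_fixedPoints_of_finite_orbit {x : K} {w : V} (hx : (orbit G x).Finite)
    (hw : stabilizer G x ≤ stabilizer G w) : w ∈ Submodule.span K (fixedPoints G V) := by
  classical
  obtain ⟨W, hW⟩ := exists_equivariant_extension hw
  set s := hx.toFinset
  have hxs : x ∈ s := hx.mem_toFinset.2 (mem_orbit_self x)
  have hsum (q : K[X]) : ∑ y ∈ s, q.eval y • W y ∈ Submodule.span K (fixedPoints G V) := by
    simp_rw [eval_eq_sum_range, Finset.sum_smul, mul_smul]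
    rw [Finset.sum_comm]
    simp_rw [← Finset.smul_sum]
    exact sum_mem fun n _ ↦ Submodule.smul_mem _ _ <|
      Submodule.subset_span (sum_pow_smul_mem_fixedPoints hx.coe_toFinset hW n)
  set q : K[X] := ∏ y ∈ s.erase x, (X - C y)
  have hqx : q.eval x ≠ 0 := by
    rw [eval_prod, Finset.prod_ne_zero_iff]
    intro y hy
    simpa [sub_eq_zero] using (Finset.ne_of_mem_erase hy).symm
  have hq : ∀ y ∈ s, y ≠ x → q.eval y • W y = 0 := fun y hy hyx ↦ by
    rw [eval_prod, Finset.prod_eq_zero (Finset.mem_erase.2 ⟨hyx, hy⟩) (by simp), zero_smul]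
  have hWx : W x = w := by simpa using hW 1
  rw [← Submodule.smul_mem_iff _ hqx, ← hWx,
    ← Finset.sum_eq_single_of_mem (f := fun y ↦ q.eval y • W y) x hxs hq]
  exact hsum q

end FiniteOrbit

section Polynomial

theorem exists_invariant_ne_zero_of_ideal {I : Ideal K[X]} (hI : I ≠ ⊥)
    (hG : ∀ g : G, ∀ p ∈ I, g • p ∈ I) : ∃ p ∈ I, p ≠ 0 ∧ ∀ g : G, g • p = p := by
  classical
  obtain ⟨q, rfl⟩ := IsPrincipalIdealRing.principal I
  have hq : q ≠ 0 := by simpa [Submodule.span_singleton_eq_bot] using hI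
  set p := normalize q
  have hp : p.Monic := monic_normalize hq
  have hmem (r : K[X]) : r ∈ Submodule.span K[X] {q} ↔ p ∣ r := by
    rw [normalize_dvd_iff, Ideal.submodule_span_eq, Ideal.mem_span_singleton]
  have hgp (g : G) : (g • p).Monic := smul_eq_map K g ▸ hp.map _
  refine ⟨p, (hmem p).2 dvd_rfl, hp.ne_zero, fun g ↦ eq_of_monic_of_dvd_of_natDegree_le hp
    (hgp g) ((hmem _).1 (hG g p ((hmem p).2 dvd_rfl))) ?_⟩
  rw [smul_eq_map K g, natDegree_map]

theorem eq_zero_of_infinite_eval_eq_zero {P : PolynomialModule K V}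
    (hP : {z | PolynomialModule.eval z P = 0}.Infinite) : P = 0 := by
  rw [← PolynomialModule.coeff_eq_zero]
  ext i
  refine (Module.forall_dual_apply_eq_zero_iff K _).1 fun f ↦ ?_
  let q : K[X] := P.coeff.sum fun n v ↦ monomial n (f v)
  have hq : q = 0 := eq_zero_of_infinite_isRoot _ <| hP.mono fun z (hz : _ = 0) ↦ by
    have hfz : f (PolynomialModule.eval z P) = 0 := by rw [hz, map_zero]
    simpa [q, PolynomialModule.eval_apply, Finsupp.sum, eval_finsetSum, mul_comm] using hfz
  have hcoeff : q.coeff i = f (P.coeff i) := by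
    by_cases hi : P.coeff i = 0 <;> simp [q, Finsupp.sum, finsetSum_coeff, coeff_monomial, hi]
  rw [← hcoeff, hq, coeff_zero]

theorem eq_of_eventually_eval_eq {l : Filter K} [l.NeBot] (hl : l ≤ cofinite)
    {P Q : PolynomialModule K V}
    (h : ∀ᶠ z in l, PolynomialModule.eval z P = PolynomialModule.eval z Q) : P = Q := by
  refine sub_eq_zero.1 (eq_zero_of_infinite_eval_eq_zero <|
    frequently_cofinite_iff_infinite.1 ((h.mono fun z hz ↦ ?_).frequently.filter_mono hl))
  rw [map_sub, hz, sub_self]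

theorem eval_smul_ofCoeff_smul (g : G) (z : K) (P : PolynomialModule K V) :
    PolynomialModule.eval (g • z) (.ofCoeff K (g • P.coeff)) = g • PolynomialModule.eval z P := by
  induction P using PolynomialModule.induction_linear with
  | zero => simp
  | add P Q hP hQ => simp [hP, hQ]
  | single n v => simp [smul_distrib_smul, smul_pow']

theorem eval_mem_of_forall_coeff_mem {N : Submodule K V} {P : PolynomialModule K V}
    (hP : ∀ n, P.coeff n ∈ N) (z : K) : PolynomialModule.eval z P ∈ N := by
  rw [PolynomialModule.eval_apply]
  exact sum_mem fun n _ ↦ N.smul_mem _ (hP n)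

end Polynomial

section RationalMaps

/-- The denominators of `W` along `l`: polynomials `h` such that `h • W` eventually agrees with a
polynomial with coefficients in `V`. Rationality of the germ of `W` along `l ≤ cofinite` is encoded
as this ideal being nonzero. -/
def denominatorIdeal (l : Filter K) (W : K → V) : Ideal K[X] where
  carrier := {h | ∃ P : PolynomialModule K V, ∀ᶠ z in l, h.eval z • W z = PolynomialModule.eval z P}
  zero_mem' := ⟨0, by simp⟩
  add_mem' := by
    rintro h₁ h₂ ⟨P₁, hP₁⟩ ⟨P₂, hP₂⟩
    refine ⟨P₁ + P₂, ?_⟩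
    filter_upwards [hP₁, hP₂] with z hz₁ hz₂
    rw [eval_add, add_smul, hz₁, hz₂, map_add]
  smul_mem' := by
    rintro q h ⟨P, hP⟩
    refine ⟨q • P, ?_⟩
    filter_upwards [hP] with z hz
    rw [smul_eq_mul, eval_mul, mul_smul, hz, PolynomialModule.eval_smul]

variable {l : Filter K} {W W₁ W₂ : K → V}

theorem denominatorIdeal_congr (h : W₁ =ᶠ[l] W₂) :
    denominatorIdeal l W₁ = denominatorIdeal l W₂ := by
  ext p
  refine exists_congr fun P ↦ eventually_congr ?_
  filter_upwards [h] with z hz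
  rw [hz]

theorem denominatorIdeal_zero : denominatorIdeal l (0 : K → V) = ⊤ :=
  (Ideal.eq_top_iff_one _).2 ⟨0, by simp⟩

theorem inf_denominatorIdeal_le_add :
    denominatorIdeal l W₁ ⊓ denominatorIdeal l W₂ ≤ denominatorIdeal l (W₁ + W₂) := by
  rintro h ⟨⟨P₁, hP₁⟩, P₂, hP₂⟩
  refine ⟨P₁ + P₂, ?_⟩
  filter_upwards [hP₁, hP₂] with z hz₁ hz₂
  rw [Pi.add_apply, smul_add, hz₁, hz₂, map_add]

theorem denominatorIdeal_add_ne_bot (h₁ : denominatorIdeal l W₁ ≠ ⊥)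
    (h₂ : denominatorIdeal l W₂ ≠ ⊥) : denominatorIdeal l (W₁ + W₂) ≠ ⊥ :=
  ne_bot_of_le_ne_bot (mt Ideal.mul_eq_bot.1 (not_or.2 ⟨h₁, h₂⟩))
    (Ideal.mul_le_inf.trans inf_denominatorIdeal_le_add)

theorem denominatorIdeal_sum_ne_bot {ι : Type*} {s : Finset ι} {W : ι → K → V}
    (hW : ∀ i ∈ s, denominatorIdeal l (W i) ≠ ⊥) : denominatorIdeal l (∑ i ∈ s, W i) ≠ ⊥ :=
  Finset.sum_induction W (denominatorIdeal l · ≠ ⊥) (fun _ _ ↦ denominatorIdeal_add_ne_bot)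
    (by simp [denominatorIdeal_zero]) hW

theorem eventually_eval_ne_zero (hl : l ≤ cofinite) {p : K[X]} (hp : p ≠ 0) :
    ∀ᶠ z in l, p.eval z ≠ 0 :=
  hl (eventually_cofinite.2 (by simpa using finite_setOfPred_isRoot hp))

theorem denominatorIdeal_div_smul_ne_bot (hl : l ≤ cofinite) (n d : K[X]) (v : V) :
    denominatorIdeal l (fun z ↦ (n.eval z / d.eval z) • v) ≠ ⊥ := by
  obtain rfl | hd := eq_or_ne d 0
  · simp_rw [eval_zero, div_zero, zero_smul]
    exact denominatorIdeal_zero.trans_ne top_ne_bot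
  · refine (Submodule.ne_bot_iff _).2 ⟨d, ⟨n • .single K 0 v, ?_⟩, hd⟩
    filter_upwards [eventually_eval_ne_zero hl hd] with z hz
    simp [smul_smul, mul_div_cancel₀ _ hz]

theorem eventually_smul_eval_smul_eq {g : G} (hg : Tendsto (g⁻¹ • · : K → K) l l)
    (hW : ∀ᶠ z in l, W (g • z) = g • W z) {h : K[X]} {P : PolynomialModule K V}
    (hP : ∀ᶠ z in l, h.eval z • W z = PolynomialModule.eval z P) :
    ∀ᶠ z in l, (g • h).eval z • W z = PolynomialModule.eval z (.ofCoeff K (g • P.coeff)) := by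
  filter_upwards [hg.eventually (hP.and hW)] with z ⟨hz, hWz⟩
  rw [smul_inv_smul] at hWz
  calc (g • h).eval z • W z
    _ = (g • h).eval (g • g⁻¹ • z) • g • W (g⁻¹ • z) := by rw [smul_inv_smul, hWz]
    _ = g • PolynomialModule.eval (g⁻¹ • z) P := by
      rw [smul_eval_smul, ← hz, smul_distrib_smul g (h.eval _)]
    _ = PolynomialModule.eval z (.ofCoeff K (g • P.coeff)) := by
      rw [← eval_smul_ofCoeff_smul, smul_inv_smul]

theorem eventually_mem_span_fixedPoints [l.NeBot] (hl : l ≤ cofinite)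
    (hG : ∀ g : G, Tendsto (g • · : K → K) l l) (hW : ∀ g : G, ∀ᶠ z in l, W (g • z) = g • W z)
    (hrat : denominatorIdeal l W ≠ ⊥) :
    ∀ᶠ z in l, W z ∈ Submodule.span K (fixedPoints G V) := by
  obtain ⟨h, ⟨P, hP⟩, hh, hhG⟩ := exists_invariant_ne_zero_of_ideal hrat
    fun g _ ⟨P, hP⟩ ↦ ⟨_, eventually_smul_eval_smul_eq (hG g⁻¹) (hW g) hP⟩
  have hPG (g : G) : PolynomialModule.ofCoeff K (g • P.coeff) = P := by
    refine eq_of_eventually_eval_eq hl ?_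
    filter_upwards [hP, eventually_smul_eval_smul_eq (hG g⁻¹) (hW g) hP] with z hz hgz
    rw [← hgz, hhG, hz]
  filter_upwards [hP, eventually_eval_ne_zero hl hh] with z hz hhz
  rw [← Submodule.smul_mem_iff _ hhz, hz]
  refine eval_mem_of_forall_coeff_mem (fun n ↦ Submodule.subset_span fun g ↦ ?_) z
  rw [← Finsupp.smul_apply, ← PolynomialModule.coeff_ofCoeff (R := K) (g • P.coeff), hPG]

end RationalMaps

end SemilinearAction

section Extension

theorem nonempty_algEquiv_of_trdeg_eq {L : Type*} {K K' : Type u} [Field L] [Field K] [Field K']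
    [IsAlgClosed K] [IsAlgClosed K'] [Algebra L K] [Algebra L K']
    (h : Algebra.trdeg L K = Algebra.trdeg L K') : Nonempty (K ≃ₐ[L] K') := by
  obtain ⟨s, hs⟩ := exists_isTranscendenceBasis L K
  obtain ⟨t, ht⟩ := exists_isTranscendenceBasis L K'
  obtain ⟨e⟩ : Nonempty (s ≃ t) := by
    rwa [← Cardinal.eq, hs.cardinalMk_eq_trdeg, ht.cardinalMk_eq_trdeg]
  have := IsAlgClosed.isAlgClosure_of_transcendence_basis _ hs
  have := IsAlgClosed.isAlgClosure_of_transcendence_basis _ ht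
  let E : Algebra.adjoin L (Set.range ((↑) : s → K)) ≃ₐ[L]
      Algebra.adjoin L (Set.range ((↑) : t → K')) :=
    hs.1.aevalEquiv.symm.trans ((MvPolynomial.renameEquiv L e).trans ht.1.aevalEquiv)
  refine ⟨AlgEquiv.ofRingEquiv (f := IsAlgClosure.equivOfEquiv K K' E.toRingEquiv) fun c ↦ ?_⟩
  simpa [IsScalarTower.algebraMap_apply L (Algebra.adjoin L _) K] using
    IsAlgClosure.equivOfEquiv_algebraMap K K' E.toRingEquiv (algebraMap L _ c)

theorem exists_algEquiv_apply_eq {F : Type*} {L K K' : Type u} [Field F] [Field L] [Field K]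
    [Field K'] [IsAlgClosed K] [IsAlgClosed K'] [Algebra F L] [Algebra F K] [Algebra F K']
    [FinTrdeg F L] (h : Algebra.trdeg F K = Algebra.trdeg F K') (f : L →ₐ[F] K) (g : L →ₐ[F] K') :
    ∃ e : K ≃ₐ[F] K', ∀ c, e (f c) = g c := by
  let := f.toAlgebra
  let := g.toAlgebra
  have := IsScalarTower.of_algHom f
  have := IsScalarTower.of_algHom g
  obtain ⟨e⟩ : Nonempty (K ≃ₐ[L] K') := by
    refine nonempty_algEquiv_of_trdeg_eq <|
      Cardinal.eq_of_add_eq_add_left ?_ (trdeg_lt_aleph0 F L)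
    rw [trdeg_add_eq F L, trdeg_add_eq F L, h]
  exact ⟨e.restrictScalars F, e.commutes⟩

theorem exists_algEquiv_of_isConjRoot {F K : Type*} [Field F] [Field K] [IsAlgClosed K]
    [Algebra F K] {a b : K} (h : IsConjRoot F a b) : ∃ σ : Gal(K/F), σ a = b := by
  obtain ⟨e, he⟩ : ∃ e : F⟮a⟯ ≃ₐ[F] F⟮b⟯, (e (AdjoinSimple.gen F a) : K) = b := by
    by_cases ha : IsIntegral F a
    · exact ⟨minpoly.algEquiv ha.isAlgebraic h,
        congr_arg Subtype.val (minpoly.algEquiv_apply ha.isAlgebraic h)⟩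
    · have ha' : Transcendental F a := mt IsAlgebraic.isIntegral ha
      have hb' : Transcendental F b := mt IsAlgebraic.isIntegral (h.isIntegral_iff.not.1 ha)
      exact ⟨(RatFunc.algEquivOfTranscendental a ha').symm.trans
        (RatFunc.algEquivOfTranscendental b hb'), by simp⟩
  have : Algebra.EssFiniteType F F⟮a⟯ :=
    essFiniteType_iff.2 (fg_adjoin_of_finite (Set.finite_singleton a))
  obtain ⟨σ, hσ⟩ := exists_algEquiv_apply_eq rfl F⟮a⟯.val (F⟮b⟯.val.comp e.toAlgHom)
  exact ⟨σ, (hσ (AdjoinSimple.gen F a)).trans he⟩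

theorem isConjRoot_of_transcendental {F K : Type*} [Field F] [Field K] [Algebra F K] {a b : K}
    (ha : Transcendental F a) (hb : Transcendental F b) : IsConjRoot F a b := by
  rw [isConjRoot_def, minpoly.eq_zero (mt IsIntegral.isAlgebraic ha),
    minpoly.eq_zero (mt IsIntegral.isAlgebraic hb)]

theorem exists_ne_and_isConjRoot {F K : Type*} [Field F] [CharZero F] [Field K] [IsAlgClosed K]
    [Algebra F K] {c : K} (hc : c ∉ (⊥ : IntermediateField F K)) : ∃ b ≠ c, IsConjRoot F c b := by
  by_cases hint : IsIntegral F c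
  · obtain ⟨b, hcb, hb⟩ := (notMem_iff_exists_ne_and_isConjRoot
      (minpoly.irreducible hint).separable (IsAlgClosed.splits _)).1 hc
    exact ⟨b, hcb.symm, hb⟩
  · have hc' : Transcendental F c := mt IsAlgebraic.isIntegral hint
    have hc1 : Transcendental F (c + 1) := fun h ↦ hc' (by simpa using h.sub isAlgebraic_one)
    exact ⟨c + 1, by simp, isConjRoot_of_transcendental hc' hc1⟩

variable {k K : Type*} [Field k] [Field K] [IsAlgClosed K] [Algebra k K]

theorem exists_mem_fixingSubgroup_of_isConjRoot {F : IntermediateField k K} {a b : K}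
    (h : IsConjRoot F a b) : ∃ σ ∈ F.fixingSubgroup, σ a = b := by
  obtain ⟨σ, hσ⟩ := exists_algEquiv_of_isConjRoot h
  exact ⟨F.fixingSubgroupEquiv.symm σ, SetLike.coe_mem _, hσ⟩

theorem fixedField_fixingSubgroup_of_isAlgClosed [CharZero k] (F : IntermediateField k K) :
    fixedField F.fixingSubgroup = F := by
  refine le_antisymm (fun c hc ↦ ?_) ((le_iff_le _ _).2 le_rfl)
  by_contra hcF
  obtain ⟨b, hbc, hb⟩ := exists_ne_and_isConjRoot (F := F) (c := c) <| by
    rintro ⟨a, rfl⟩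
    exact hcF a.2
  obtain ⟨σ, hσF, hσ⟩ := exists_mem_fixingSubgroup_of_isConjRoot hb
  exact hbc (hσ.symm.trans (hc ⟨σ, hσF⟩))

end Extension

section GenericFilter

variable {k K : Type*} [Field k] [Field K] [Algebra k K]

theorem restrictScalars_adjoin_simple_fg {F : IntermediateField k K} (hF : F.FG) (x : K) :
    (F⟮x⟯.restrictScalars k).FG := by
  rw [restrictScalars_adjoin_eq_sup]
  exact fg_sup hF (fg_adjoin_of_finite (Set.finite_singleton x))

theorem fg_map {K' : Type*} [Field K'] [Algebra k K'] {F : IntermediateField k K} (hF : F.FG)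
    (f : K →ₐ[k] K') : (F.map f).FG := by
  obtain ⟨t, ht, rfl⟩ := fg_def.1 hF
  exact adjoin_map k t f ▸ fg_adjoin_of_finite (ht.image f)

theorem transcendental_of_le {E F : IntermediateField k K} (hEF : E ≤ F) {z : K}
    (hz : Transcendental F z) : Transcendental E z :=
  hz.of_tower_top_of_subalgebra_le (B := F.toSubalgebra) hEF

theorem transcendental_map_iff (σ : Gal(K/k)) {M : IntermediateField k K} {z : K} :
    Transcendental (M.map σ.toAlgHom) (σ z) ↔ Transcendental M z :=
  transcendental_ringHom_iff_of_comp_eq (intermediateFieldMap σ M) (σ : K →+* K) σ.injective rfl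

variable (k K) in
/-- The filter of generic points of the affine line: a property holds eventually if it holds for
every `z` transcendental over a suitable finitely generated subextension, depending on the property.
-/
def genericFilter : Filter K where
  sets := {s | ∃ M : IntermediateField k K, M.FG ∧ ∀ z, Transcendental M z → z ∈ s}
  univ_sets := ⟨⊥, fg_bot, fun _ _ ↦ Set.mem_univ _⟩
  sets_of_superset := fun ⟨M, hM, h⟩ hst ↦ ⟨M, hM, fun z hz ↦ hst (h z hz)⟩
  inter_sets := fun ⟨M, hM, hs⟩ ⟨N, hN, ht⟩ ↦ ⟨M ⊔ N, fg_sup hM hN, fun z hz ↦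
    ⟨hs z (transcendental_of_le le_sup_left hz), ht z (transcendental_of_le le_sup_right hz)⟩⟩

theorem eventually_genericFilter_iff {p : K → Prop} : (∀ᶠ z in genericFilter k K, p z) ↔
    ∃ M : IntermediateField k K, M.FG ∧ ∀ z, Transcendental M z → p z :=
  Iff.rfl

theorem genericFilter_neBot
    (h : ∀ L : IntermediateField k K, L.FG → ∃ x : K, Transcendental L x) :
    (genericFilter k K).NeBot := by
  refine ⟨fun hbot ↦ ?_⟩
  obtain ⟨M, hM, hp⟩ := eventually_genericFilter_iff.1 (eventually_false_iff_eq_bot.2 hbot)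
  obtain ⟨x, hx⟩ := h M hM
  exact hp x hx

theorem genericFilter_le_cofinite : genericFilter k K ≤ cofinite := by
  refine le_cofinite_iff_eventually_ne.2 fun x ↦ eventually_genericFilter_iff.2
    ⟨k⟮x⟯, fg_adjoin_of_finite (Set.finite_singleton x), ?_⟩
  rintro _ hz rfl
  exact hz (isAlgebraic_algebraMap (⟨_, mem_adjoin_simple_self k _⟩ : k⟮_⟯))

theorem tendsto_genericFilter (σ : Gal(K/k)) :
    Tendsto σ (genericFilter k K) (genericFilter k K) := by
  rintro s ⟨M, hM, hs⟩
  refine ⟨M.map σ.symm.toAlgHom, fg_map hM _, fun z hz ↦ hs _ ?_⟩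
  rwa [← transcendental_map_iff σ.symm, AlgEquiv.symm_apply_apply]

end GenericFilter

section Descent

variable {k K : Type*} [Field k] [Field K] [Algebra k K]

theorem mem_fixingSubgroup_adjoin_simple_iff {F : IntermediateField k K} {x : K} {σ : Gal(K/k)} :
    σ ∈ (F⟮x⟯.restrictScalars k).fixingSubgroup ↔ σ ∈ F.fixingSubgroup ∧ σ x = x := by
  rw [restrictScalars_adjoin_eq_sup, fixingSubgroup_sup, Subgroup.mem_inf]
  refine and_congr_right fun _ ↦ ?_
  simpa using forall_mem_adjoin_smul_eq_self_iff k (S := {x}) σ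

theorem stabilizer_le_of_mem_fixedPoints {X : Type*} [MulAction Gal(K/k) X]
    {F : IntermediateField k K} {x : K} {w : X}
    (hw : w ∈ fixedPoints (F⟮x⟯.restrictScalars k).fixingSubgroup X) :
    stabilizer F.fixingSubgroup x ≤ stabilizer F.fixingSubgroup w :=
  fun σ hσ ↦ hw ⟨σ, mem_fixingSubgroup_adjoin_simple_iff.2 ⟨σ.2, hσ⟩⟩

theorem smul_aeval_of_fixingSubgroup {M : IntermediateField k K} (σ : M.fixingSubgroup) (y : K)
    (p : M[X]) : σ • aeval y p = aeval (σ • y) p :=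
  (aeval_algHom_apply (M.fixingSubgroupEquiv σ) y p).symm

theorem finite_orbit_fixingSubgroup {F : IntermediateField k K} {x : K} (hx : IsIntegral F x) :
    (orbit F.fixingSubgroup x).Finite := by
  refine ((minpoly F x).rootSet_finite K).subset ?_
  rintro _ ⟨σ, rfl⟩
  have h := isConjRoot_of_algEquiv (R := F) x (F.fixingSubgroupEquiv σ)
  exact mem_rootSet.2 ⟨minpoly.ne_zero hx, h.aeval_eq_zero⟩

variable {V : Type*} [IsAlgClosed K] [AddCommGroup V] [Module K V] [DistribMulAction Gal(K/k) V]
  [SMulDistribClass Gal(K/k) K V]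

theorem repr_mem_of_mem_fixedPoints [CharZero k] {F : IntermediateField k K} {ι : Type*}
    {e : Module.Basis ι K V} (he : ∀ i, e i ∈ fixedPoints F.fixingSubgroup V) {v : V}
    (hv : v ∈ fixedPoints F.fixingSubgroup V) (i : ι) : e.repr v i ∈ F := by
  rw [← fixedField_fixingSubgroup_of_isAlgClosed F]
  intro σ
  rw [← repr_smul_of_mem_fixedPoints e he, hv]

theorem repr_mem_adjoin_simple [CharZero k] {M : IntermediateField k K} {ι : Type*}
    {e : Module.Basis ι K V} (he : ∀ i, e i ∈ fixedPoints M.fixingSubgroup V) {y : K} {v : V}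
    (hv : stabilizer M.fixingSubgroup y ≤ stabilizer M.fixingSubgroup v) (i : ι) :
    e.repr v i ∈ M⟮y⟯ := by
  refine repr_mem_of_mem_fixedPoints (F := M⟮y⟯.restrictScalars k) (fun j σ ↦ ?_) (fun σ ↦ ?_) i
  · exact he j ⟨σ, (mem_fixingSubgroup_adjoin_simple_iff.1 σ.2).1⟩
  · obtain ⟨hσM, hσy⟩ := mem_fixingSubgroup_adjoin_simple_iff.1 σ.2
    exact hv (show (⟨σ, hσM⟩ : M.fixingSubgroup) ∈ _ from hσy)

theorem denominatorIdeal_ne_bot_of_equivariant [CharZero k] {M : IntermediateField k K} (hM : M.FG)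
    {y : K} (hy : Transcendental M y) {ι : Type*} {e : Module.Basis ι K V}
    (he : ∀ i, e i ∈ fixedPoints M.fixingSubgroup V) {W : K → V}
    (hW : ∀ σ : M.fixingSubgroup, W (σ • y) = σ • W y) :
    denominatorIdeal (genericFilter k K) W ≠ ⊥ := by
  have hstab : stabilizer M.fixingSubgroup y ≤ stabilizer M.fixingSubgroup (W y) := fun σ hσ ↦ by
    rw [mem_stabilizer_iff, ← hW, mem_stabilizer_iff.1 hσ]
  choose n d hnd using fun i ↦ (mem_adjoin_simple_iff M _).1 (repr_mem_adjoin_simple he hstab i)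
  have hW' : W =ᶠ[genericFilter k K]
      ∑ i ∈ (e.repr (W y)).support, fun z ↦ (aeval z (n i) / aeval z (d i)) • e i := by
    refine eventually_genericFilter_iff.2 ⟨M, hM, fun z hz ↦ ?_⟩
    obtain ⟨σ, hσM, hσ⟩ :=
      exists_mem_fixingSubgroup_of_isConjRoot (isConjRoot_of_transcendental hy hz)
    lift σ to M.fixingSubgroup using hσM
    obtain rfl : σ • y = z := hσ
    calc W (σ • y)
      _ = σ • ∑ i ∈ (e.repr (W y)).support, e.repr (W y) i • e i := by
        rw [hW]
        exact congr_arg (σ • ·) (e.linearCombination_repr (W y)).symm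
      _ = ∑ i ∈ (e.repr (W y)).support,
          (aeval (σ • y) (n i) / aeval (σ • y) (d i)) • e i := by
        simp_rw [Finset.smul_sum, smul_distrib_smul, he _ σ, hnd, smul_div₀',
          smul_aeval_of_fixingSubgroup]
      _ = _ := by rw [Finset.sum_apply]
  rw [denominatorIdeal_congr hW']
  refine denominatorIdeal_sum_ne_bot fun i _ ↦ ?_
  simpa only [eval_map_algebraMap] using denominatorIdeal_div_smul_ne_bot genericFilter_le_cofinite
    ((n i).map (algebraMap M K)) ((d i).map (algebraMap M K)) (e i)

theorem mem_span_fixedPoints_of_transcendental [CharZero k]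
    (htr : ∀ L : IntermediateField k K, L.FG → ∃ x : K, Transcendental L x)
    {F : IntermediateField k K} (hF : F.FG) {x : K} (hx : Transcendental F x)
    (hspan : Submodule.span K (fixedPoints (F⟮x⟯.restrictScalars k).fixingSubgroup V) = ⊤)
    {w : V} (hw : w ∈ fixedPoints (F⟮x⟯.restrictScalars k).fixingSubgroup V) :
    w ∈ Submodule.span K (fixedPoints F.fixingSubgroup V) := by
  set M := F⟮x⟯.restrictScalars k
  have hM : M.FG := restrictScalars_adjoin_simple_fg hF x
  have hFM : F ≤ M := le_sup_left.trans_eq (restrictScalars_adjoin_eq_sup _ F {x}).symm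
  have := genericFilter_neBot htr
  obtain ⟨W, hW⟩ := exists_equivariant_extension (stabilizer_le_of_mem_fixedPoints hw)
  have horbit {z : K} (hz : Transcendental F z) : ∃ σ : F.fixingSubgroup, σ • x = z := by
    obtain ⟨σ, hσF, hσ⟩ :=
      exists_mem_fixingSubgroup_of_isConjRoot (isConjRoot_of_transcendental hx hz)
    exact ⟨⟨σ, hσF⟩, hσ⟩
  have hWF (τ : F.fixingSubgroup) {z : K} (hz : Transcendental F z) : W (τ • z) = τ • W z := by
    obtain ⟨σ, rfl⟩ := horbit hz
    rw [← mul_smul, hW, hW, mul_smul]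
  have hrat : denominatorIdeal (genericFilter k K) W ≠ ⊥ := by
    obtain ⟨y, hy⟩ := htr M hM
    exact denominatorIdeal_ne_bot_of_equivariant hM hy (e := .ofSpan hspan.ge)
      (fun i ↦ Module.Basis.ofSpan_subset hspan.ge ⟨i, rfl⟩) fun σ ↦
        hWF ⟨σ, fixingSubgroup_le hFM σ.2⟩ (transcendental_of_le hFM hy)
  have hgen : ∀ᶠ z in genericFilter k K, Transcendental F z := ⟨F, hF, fun _ ↦ id⟩
  obtain ⟨z, hWz, hz⟩ := ((eventually_mem_span_fixedPoints genericFilter_le_cofinite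
    (fun σ : F.fixingSubgroup ↦ tendsto_genericFilter (σ : Gal(K/k)))
    (fun σ ↦ hgen.mono fun z ↦ hWF σ) hrat).and hgen).exists
  obtain ⟨σ, rfl⟩ := horbit hz
  rwa [hW, smul_mem_span_fixedPoints_iff] at hWz

theorem span_fixedPoints_eq_top_of_adjoin_simple [CharZero k]
    (htr : ∀ L : IntermediateField k K, L.FG → ∃ x : K, Transcendental L x)
    {F : IntermediateField k K} (hF : F.FG) {x : K}
    (hspan : Submodule.span K (fixedPoints (F⟮x⟯.restrictScalars k).fixingSubgroup V) = ⊤) :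
    Submodule.span K (fixedPoints F.fixingSubgroup V) = ⊤ := by
  rw [eq_top_iff, ← hspan, Submodule.span_le]
  intro w hw
  by_cases hx : IsIntegral F x
  · exact mem_span_fixedPoints_of_finite_orbit (finite_orbit_fixingSubgroup hx)
      (stabilizer_le_of_mem_fixedPoints hw)
  · exact mem_span_fixedPoints_of_transcendental htr hF (mt IsAlgebraic.isIntegral hx) hspan hw

theorem span_fixedPoints_eq_top [CharZero k]
    (htr : ∀ L : IntermediateField k K, L.FG → ∃ x : K, Transcendental L x)
    {L : IntermediateField k K} (hL : L.FG)
    (hspan : Submodule.span K (fixedPoints L.fixingSubgroup V) = ⊤) :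
    Submodule.span K (fixedPoints Gal(K/k) V) = ⊤ := by
  refine (induction_on_adjoin_fg (fun L ↦ L.FG ∧
    (Submodule.span K (fixedPoints L.fixingSubgroup V) = ⊤ →
      Submodule.span K (fixedPoints Gal(K/k) V) = ⊤)) ⟨fg_bot, fun h ↦ ?_⟩
    (fun F x ⟨hF, ih⟩ ↦ ⟨restrictScalars_adjoin_simple_fg hF x, fun h ↦
      ih (span_fixedPoints_eq_top_of_adjoin_simple htr hF h)⟩) L hL).2 hspan
  rw [eq_top_iff, ← h]
  refine Submodule.span_mono fun v hv σ ↦ hv ⟨σ, ?_⟩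
  rw [fixingSubgroup_bot]
  exact Subgroup.mem_top σ

end Descent

section Algebra

theorem exists_finset_subset_adjoin_eq_top {A B : Type*} [CommSemiring A] [Semiring B] [Algebra A B]
    [Algebra.FiniteType A B] {t : Set B} (ht : Submodule.span A t = ⊤) :
    ∃ s : Finset B, (s : Set B) ⊆ t ∧ Algebra.adjoin A (s : Set B) = ⊤ := by
  classical
  obtain ⟨s, hs⟩ := Algebra.FiniteType.out (R := A) (A := B)
  choose T hTt hT using fun b : B ↦
    Submodule.mem_span_finite_of_mem_span (ht ▸ Submodule.mem_top : b ∈ Submodule.span A t)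
  refine ⟨s.biUnion T, by simpa using fun b _ ↦ hTt b, ?_⟩
  rw [eq_top_iff, ← hs, Algebra.adjoin_le_iff]
  intro b hb
  exact Algebra.adjoin_mono (Finset.coe_subset.2 (Finset.subset_biUnion_of_mem T hb))
    (Algebra.span_le_adjoin A _ (hT b))

theorem closure_subset_fixedPoints {G R : Type*} [Monoid G] [Monoid R] [MulDistribMulAction G R]
    {s : Set R} (hs : s ⊆ fixedPoints G R) :
    (Submonoid.closure s : Set R) ⊆ fixedPoints G R :=
  (Submonoid.closure_le (S := FixedPoints.submonoid G R)).2 hs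

variable {k K R : Type*} [Field k] [CharZero k] [Field K] [IsAlgClosed K] [Algebra k K]
  [Ring R] [Algebra K R] [MulSemiringAction Gal(K/k) R] [SMulDistribClass Gal(K/k) K R]

theorem span_fixedPoints_eq_top_of_finiteType [Algebra.FiniteType K R]
    (htr : ∀ L : IntermediateField k K, L.FG → ∃ x : K, Transcendental L x)
    (hcont : ∀ r : R, ∃ L : IntermediateField k K, L.FG ∧ r ∈ fixedPoints L.fixingSubgroup R) :
    Submodule.span K (fixedPoints Gal(K/k) R) = ⊤ := by
  obtain ⟨s, hs⟩ := Algebra.FiniteType.out (R := K) (A := R)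
  choose L hL hLfix using hcont
  have hsL : (s : Set R) ⊆ fixedPoints (⨆ r : s, L r).fixingSubgroup R := fun r hr ↦
    fixedPoints_subgroup_antitone _ _ (fixingSubgroup_le (le_iSup (fun r : s ↦ L r) ⟨r, hr⟩))
      (hLfix r)
  refine span_fixedPoints_eq_top htr (fg_iSup fun r : s ↦ hL r) (eq_top_iff.2 ?_)
  rw [← Algebra.top_toSubmodule, ← hs, Algebra.adjoin_eq_span]
  exact Submodule.span_mono (closure_subset_fixedPoints hsL)

variable [Algebra k R] [IsScalarTower k K R]

theorem fixedPoints_subset_adjoin {s : Set R} (hs : Algebra.adjoin K s = ⊤)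
    (hfix : s ⊆ fixedPoints Gal(K/k) R) : fixedPoints Gal(K/k) R ⊆ Algebra.adjoin k s := by
  intro r hr
  have hspan : ⊤ ≤ Submodule.span K (Submonoid.closure s : Set R) := by
    rw [← Algebra.adjoin_eq_span, hs, Algebra.top_toSubmodule]
  let e := Module.Basis.ofSpan hspan
  have he (i) : e i ∈ Submonoid.closure s := Module.Basis.ofSpan_subset hspan ⟨i, rfl⟩
  rw [← e.linearCombination_repr r]
  refine sum_mem fun i _ ↦ ?_
  obtain ⟨a, ha⟩ : e.repr r i ∈ (⊥ : IntermediateField k K) :=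
    repr_mem_of_mem_fixedPoints (fun i σ ↦ closure_subset_fixedPoints hfix (he i) σ)
      (fun σ ↦ hr σ) i
  have hsa : Submonoid.closure s ≤ (Algebra.adjoin k s).toSubmonoid :=
    Submonoid.closure_le.2 Algebra.subset_adjoin
  have hmem : a • e i ∈ Algebra.adjoin k s := Subalgebra.smul_mem _ (hsa (he i)) a
  rwa [← algebraMap_smul K, show algebraMap k K a = e.repr r i from ha] at hmem

end Algebra

end WeilDescent

open WeilDescent

theorem weil_descent_affine_algebraic_general {k K R : Type*} [Field k] [CharZero k] [Field K]
    [IsAlgClosed K] [Algebra k K]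
    (htr : ∀ L : IntermediateField k K, L.FG → ∃ x : K, Transcendental L x)
    [Ring R] [Algebra K R] [Algebra k R] [IsScalarTower k K R] [Algebra.FiniteType K R]
    [MulSemiringAction Gal(K/k) R] [SMulDistribClass Gal(K/k) K R]
    (hcont : ∀ r : R, ∃ L : IntermediateField k K, L.FG ∧ r ∈ fixedPoints L.fixingSubgroup R) :
    Submodule.span K (fixedPoints Gal(K/k) R) = ⊤ ∧
      ∃ s : Finset R, (s : Set R) ⊆ fixedPoints Gal(K/k) R ∧
        ∀ r ∈ fixedPoints Gal(K/k) R, r ∈ Algebra.adjoin k (s : Set R) := by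
  have hspan := span_fixedPoints_eq_top_of_finiteType htr hcont
  obtain ⟨s, hsfix, hs⟩ := exists_finset_subset_adjoin_eq_top hspan
  exact ⟨hspan, s, hsfix, fixedPoints_subset_adjoin hs hsfix⟩

/-- Weil descent for affine schemes (algebraic form). -/
theorem weil_descent_affine_algebraic
    (k K : Type) [Field k] [CharZero k] [Field K] [IsAlgClosed K] [Algebra k K]
    -- `K` has infinite transcendence degree over `k`
    (htr : ∀ L : IntermediateField k K, L.FG → ∃ x : K, Transcendental L x)
    (R : Type) [CommRing R] [Algebra K R] [Algebra k R] [IsScalarTower k K R]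
    -- `R` is a finitely generated `K`-algebra
    (hfg : Algebra.FiniteType K R)
    -- a semilinear action of `Aut(K/k)` on `R`
    (φ : (K ≃ₐ[k] K) →* (R ≃+* R))
    (hsemi : ∀ (σ : K ≃ₐ[k] K) (c : K) (r : R),
      φ σ (algebraMap K R c * r) = algebraMap K R (σ c) * φ σ r)
    -- continuity of the action
    (hcont : ∀ r : R, ∃ L : IntermediateField k K, L.FG ∧
      ∀ σ : K ≃ₐ[k] K, (∀ x ∈ L, σ x = x) → φ σ r = r) :
    -- the fixed subring `R₀` spans `R` over `K` and is a finitely generated `k`-algebra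
    Submodule.span K {r : R | ∀ σ : K ≃ₐ[k] K, φ σ r = r} = ⊤ ∧
    ∃ s : Finset R, (s : Set R) ⊆ {r : R | ∀ σ : K ≃ₐ[k] K, φ σ r = r} ∧
      ∀ r ∈ {r : R | ∀ σ : K ≃ₐ[k] K, φ σ r = r}, r ∈ Algebra.adjoin k (s : Set R) := by
  let := MulSemiringAction.compHom R φ
  have : SMulDistribClass Gal(K/k) K R := ⟨fun σ c r ↦ by
    rw [Algebra.smul_def, Algebra.smul_def]
    exact hsemi σ c r⟩
  refine weil_descent_affine_algebraic_general htr fun r ↦ ?_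
  obtain ⟨L, hL, hr⟩ := hcont r
  exact ⟨L, hL, fun σ ↦ hr σ ((IntermediateField.mem_fixingSubgroup_iff L σ).1 σ.2)⟩
end

section
/- Weil descent for quasi-affine schemes: Let k be a field of characteristic zero and K an algebraically closed field extension of k of infinite transcendence degree over k. Let Y be an integral scheme that is quasi-affine over K, equipped with a continuous descent datum with respect to K/k. Then the descent datum is effective, and the scheme X over k realizing it can be taken quasi-affine of finite type over k. -/
open AlgebraicGeometry CategoryTheory CategoryTheory.Limits

noncomputable section

namespace Paper

attribute [local instance] MvPolynomial.gradedAlgebra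

/-- Projective `n`-space over a ring `K`, as `Proj` of the polynomial ring in `n + 1`
variables with its grading by total degree. -/
def ProjSpace (K : Type) [CommRing K] (n : ℕ) : Scheme :=
  Proj (MvPolynomial.homogeneousSubmodule (Fin (n + 1)) K)

/-- The structure morphism `ℙⁿ_K ⟶ Spec K`. -/
def ProjSpace.structMap (K : Type) [CommRing K] (n : ℕ) :
    ProjSpace K n ⟶ Spec (CommRingCat.of K) :=
  Proj.toSpecZero _ ≫ Spec.map (CommRingCat.ofHom
    (algebraMap K (MvPolynomial.homogeneousSubmodule (Fin (n + 1)) K 0)))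

/-- A scheme `Y` with structure morphism `p : Y ⟶ Spec K` is quasi-projective over `K` if
for some `n` there is an immersion (locally closed immersion) `Y ⟶ ℙⁿ_K` over `K`. -/
def QuasiProjectiveOver (K : Type) [CommRing K] {Y : Scheme}
    (p : Y ⟶ Spec (CommRingCat.of K)) : Prop :=
  ∃ (n : ℕ) (f : Y ⟶ ProjSpace K n), IsImmersion f ∧ f ≫ ProjSpace.structMap K n = p

/-- A scheme `Y` with structure morphism `p : Y ⟶ Spec K` is quasi-affine over `K` if it is
of finite type over `K` and admits an open immersion over `K` into an affine `K`-scheme. -/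
def QuasiAffineOver (K : Type) [CommRing K] {Y : Scheme}
    (p : Y ⟶ Spec (CommRingCat.of K)) : Prop :=
  LocallyOfFiniteType p ∧ QuasiCompact p ∧
    ∃ (Z : Scheme) (q : Z ⟶ Spec (CommRingCat.of K)) (j : Y ⟶ Z),
      IsAffine Z ∧ IsOpenImmersion j ∧ j ≫ q = p

variable (k K : Type) [Field k] [Field K] [Algebra k K]

/-- The automorphism `Spec (σ⁻¹)` of `Spec K` attached to `σ ∈ Aut(K/k)`. -/
def specAut (σ : K ≃ₐ[k] K) : Spec (CommRingCat.of K) ⟶ Spec (CommRingCat.of K) :=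
  Spec.map (CommRingCat.ofHom ((σ⁻¹ : K ≃ₐ[k] K) : K →+* K))

/-- A descent datum on the `K`-scheme `(Y, p)` with respect to `K/k`: an action of
`Aut(K/k)` on `Y` by scheme isomorphisms lifting the natural action on `Spec K`. -/
structure DescentDatum (Y : Scheme) (p : Y ⟶ Spec (CommRingCat.of K)) where
  act : (K ≃ₐ[k] K) →* Aut Y
  compat : ∀ σ : K ≃ₐ[k] K, (act σ).hom ≫ p = p ≫ specAut k K σ

lemma specAut_comp (σ : K ≃ₐ[k] K) :
    specAut k K σ ≫ Spec.map (CommRingCat.ofHom (algebraMap k K)) =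
      Spec.map (CommRingCat.ofHom (algebraMap k K)) := by
  rw [specAut, ← Spec.map_comp]
  congr 1
  ext x
  exact (σ⁻¹ : K ≃ₐ[k] K).commutes x

/-- The base change to `K` of a scheme `X` over `k`. -/
def baseChange {X : Scheme} (q : X ⟶ Spec (CommRingCat.of k)) : Scheme :=
  pullback q (Spec.map (CommRingCat.ofHom (algebraMap k K)))

/-- The automorphism `id_X × Spec (σ⁻¹)` of the base change `X ×_{Spec k} Spec K`. -/
def baseChangeAut {X : Scheme} (q : X ⟶ Spec (CommRingCat.of k)) (σ : K ≃ₐ[k] K) :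
    baseChange k K q ⟶ baseChange k K q :=
  pullback.map _ _ _ _ (𝟙 X) (specAut k K σ) (𝟙 (Spec (CommRingCat.of k)))
    (by simp) (by rw [Category.comp_id, specAut_comp])

/-- A scheme isomorphism fixes the generic point of an irreducible scheme. -/
lemma aut_base_genericPoint {Y : Scheme} [IrreducibleSpace Y] (e : Y ≅ Y) :
    e.hom.base (genericPoint Y) = genericPoint Y := by
  let h : Y ≃ₜ Y := TopCat.homeoOfIso (Scheme.forgetToTop.mapIso e)
  have hg : IsGenericPoint (h (genericPoint Y)) (⊤ : Set Y) := by
    rw [IsGenericPoint, ← Set.image_singleton, ← h.image_closure,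
      (genericPoint_spec Y).def, Set.top_eq_univ, Set.image_univ, h.surjective.range_eq]
  exact hg.eq (genericPoint_spec Y)

variable {k K}

/-- The action of `σ ∈ Aut(K/k)` on the function field of `Y`, given by pullback of rational
functions along the action of `σ⁻¹` on `Y`. -/
def DescentDatum.ffAction {Y : Scheme} [IrreducibleSpace Y] {p : Y ⟶ Spec (CommRingCat.of K)}
    (D : DescentDatum k K Y p) (σ : K ≃ₐ[k] K) :
    Y.functionField ⟶ Y.functionField :=
  eqToHom (congrArg Y.presheaf.stalk (aut_base_genericPoint ((D.act σ⁻¹ : Aut Y) : Y ≅ Y)).symm) ≫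
    (D.act σ⁻¹ : Aut Y).hom.stalkMap (genericPoint Y)

/-- Continuity of a descent datum on an irreducible scheme: every rational function
(i.e. element of the function field) is defined over a subfield of `K` that is finitely
generated over `k`. -/
def DescentDatum.IsContinuous {Y : Scheme} [IrreducibleSpace Y]
    {p : Y ⟶ Spec (CommRingCat.of K)} (D : DescentDatum k K Y p) : Prop :=
  ∀ f : Y.functionField, ∃ L : IntermediateField k K, L.FG ∧
    ∀ σ : K ≃ₐ[k] K, (∀ x ∈ L, σ x = x) → D.ffAction σ f = f

/-!
Write `G = Aut(K/k)`. Everything rests on showing that the `G`-invariant global sections of `Y` span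
`Γ(Y)` over `K`. By continuity and finite type, `Γ(Y)` is spanned by invariants of `Aut(K/M)` for
some finitely generated `M`, so it suffices to pass from `M(x)` to `M`. Let `f` be fixed by
`Aut(K/M(x))`, so that `φ(σ x) = σ f` is a well-defined map on the orbit of `x`. If `x` is algebraic
over `M`, the sums `∑ yⁿ φ(y)` over the finite orbit are invariant, and Lagrange interpolation
recovers `f` from them. If `x` is transcendental, `φ` extends to a rational curve
`y ↦ P(y) / d(y)`; its values at points of `M` are invariant, and they span all its values,
`f` included.

Once the invariants span, `Γ(Y)` and every `G`-stable ideal of it are base changes from `k`. Since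
`Y` is open in `Spec Γ(Y)`, with stable complement, it is the base change of an open subscheme of
the spectrum of the invariants.
-/

theorem polynomialModule_eval_mem_of_infinite {E V : Type*} [Field E] [AddCommGroup V]
    [Module E V] {W : Submodule E V} {P : PolynomialModule E V}
    (hP : {y | PolynomialModule.eval y P ∈ W}.Infinite) (y : E) :
    PolynomialModule.eval y P ∈ W := by
  by_contra hy
  obtain ⟨f, hfy, hWf⟩ := Submodule.exists_le_ker_of_notMem hy
  let q := PolynomialModule.equivPolynomialSelf (PolynomialModule.map E f P)
  have hq (z : E) : q.eval z = f (PolynomialModule.eval z P) := by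
    simp only [q, PolynomialModule.equivPolynomialSelf_apply_eq]
    rw [← Polynomial.coe_aeval_eq_eval, PolynomialModule.aeval_equivPolynomial]
    exact (PolynomialModule.eval_map' _ _ _).trans (PolynomialModule.eval_map E f P z)
  have hq0 : q = 0 := Polynomial.eq_zero_of_infinite_isRoot q <|
    hP.mono fun z hz ↦ (hq z).trans (hWf hz)
  exact hfy (by rw [← hq, hq0, Polynomial.eval_zero])

theorem polynomialModule_eval_eq_of_infinite {E V : Type*} [Field E] [AddCommGroup V]
    [Module E V] {P Q : PolynomialModule E V}
    (h : {y | PolynomialModule.eval y P = PolynomialModule.eval y Q}.Infinite) (y : E) :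
    PolynomialModule.eval y P = PolynomialModule.eval y Q := by
  have hsub : PolynomialModule.eval y (P - Q) ∈ (⊥ : Submodule E V) :=
    polynomialModule_eval_mem_of_infinite
      (by simpa only [map_sub, Submodule.mem_bot, sub_eq_zero] using h) y
  rwa [map_sub, Submodule.mem_bot, sub_eq_zero] at hsub

theorem exists_equivariant_orbit_map {G α β : Type*} [Group G] [MulAction G α] [MulAction G β]
    {x : α} {f : β} (hf : ∀ g : G, g • x = x → g • f = f) :
    ∃ φ : MulAction.orbit G x → β, (∀ (g : G) y, φ (g • y) = g • φ y) ∧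
      φ ⟨x, MulAction.mem_orbit_self x⟩ = f := by
  choose γ hγ using fun y : MulAction.orbit G x ↦ y.2
  have smul_eq_smul {g h : G} (hgh : g • x = h • x) : g • f = h • f := by
    rw [← inv_smul_eq_iff, smul_smul]
    refine hf _ ?_
    rw [mul_smul, hgh, inv_smul_smul]
  refine ⟨fun y ↦ γ y • f, fun g y ↦ ?_, hf _ (hγ _)⟩
  rw [smul_smul]
  refine smul_eq_smul ?_
  rw [mul_smul]
  exact (hγ _).trans (congrArg (g • ·) (hγ y).symm)

section SemilinearAction

variable {G E V : Type*} [Group G] [Field E] [MulSemiringAction G E]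
  [AddCommGroup V] [Module E V] [DistribMulAction G V] [SMulDistribClass G E V]

lemma smul_linearCombination (g : G) {ι : Type*} (e : ι → V) (c : ι →₀ E) :
    g • Finsupp.linearCombination E e c =
      Finsupp.linearCombination E (g • e) (c.mapRange (g • ·) (smul_zero g)) := by
  rw [Finsupp.linearCombination_apply, Finsupp.linearCombination_apply, Finsupp.smul_sum,
    Finsupp.sum_mapRange_index (h := fun i a ↦ a • (g • e) i) fun _ ↦ zero_smul E _]
  simp only [smul_distrib_smul, Pi.smul_apply]

theorem smul_coeff_eq_of_sub_linearCombination_mem {W : Submodule E V} {g : G}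
    (hW : ∀ w ∈ W, g • w ∈ W) {ι : Type*} {e : ι → V} (he : LinearIndependent E (W.mkQ ∘ e))
    (heg : g • e = e) {v : V} (hv : g • v = v) {c : ι →₀ E}
    (hc : v - Finsupp.linearCombination E e c ∈ W) (i : ι) : g • c i = c i := by
  have hgc : v - Finsupp.linearCombination E e (c.mapRange (g • ·) (smul_zero g)) ∈ W := by
    simpa only [smul_sub, hv, smul_linearCombination, heg] using hW _ hc
  have hdiff : Finsupp.linearCombination E e (c.mapRange (g • ·) (smul_zero g) - c) ∈ W := by
    simpa only [map_sub, sub_sub_sub_cancel_left] using W.sub_mem hc hgc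
  have hzero := linearIndependent_iff.mp he _ <| by
    rw [← Finsupp.apply_linearCombination]
    exact (Submodule.Quotient.mk_eq_zero W).mpr hdiff
  simpa [sub_eq_zero] using DFunLike.congr_fun hzero i

theorem smul_coeff_eq_of_linearCombination_eq {g : G} {ι : Type*} {e : ι → V}
    (he : LinearIndependent E e) (heg : g • e = e) {c : ι →₀ E}
    (hv : g • Finsupp.linearCombination E e c = Finsupp.linearCombination E e c) (i : ι) :
    g • c i = c i :=
  smul_coeff_eq_of_sub_linearCombination_mem (W := ⊥) (by simp)
    (he.map' (⊥ : Submodule E V).mkQ (by simp)) heg hv (by simp) i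

theorem sub_linearCombination_mem_fixedPoints {W : Submodule E V}
    (hW : ∀ g : G, ∀ w ∈ W, g • w ∈ W) {ι : Type*} {e : ι → V}
    (he : LinearIndependent E (W.mkQ ∘ e)) (hefix : ∀ i, e i ∈ MulAction.fixedPoints G V)
    {v : V} (hv : v ∈ MulAction.fixedPoints G V) {c : ι →₀ E}
    (hc : v - Finsupp.linearCombination E e c ∈ W) :
    v - Finsupp.linearCombination E e c ∈ MulAction.fixedPoints G V := fun g ↦ by
  have heg : g • e = e := funext fun i ↦ hefix i g
  have hcg : c.mapRange (g • ·) (smul_zero g) = c := Finsupp.ext fun i ↦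
    smul_coeff_eq_of_sub_linearCombination_mem (hW g) he heg (hv g) hc i
  rw [smul_sub, hv g, smul_linearCombination, heg, hcg]

theorem le_span_inter_fixedPoints {W : Submodule E V} (hW : ∀ g : G, ∀ w ∈ W, g • w ∈ W)
    (hspan : W ≤ Submodule.span E (MulAction.fixedPoints G V)) :
    W ≤ Submodule.span E (W ∩ MulAction.fixedPoints G V) := by
  obtain ⟨b, hb, hbspan, hbli⟩ := exists_linearIndependent E (W.mkQ '' MulAction.fixedPoints G V)
  choose e he_fixed he using fun i : b ↦ hb i.2
  have hmkQ : W.mkQ ∘ e = Subtype.val := funext he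
  have hli : LinearIndependent E (W.mkQ ∘ e) := hmkQ ▸ hbli
  have hfixed : MulAction.fixedPoints G V ⊆
      (Submodule.span E (W ∩ MulAction.fixedPoints G V) ⊔
        LinearMap.range (Finsupp.linearCombination E e) : Submodule E V) := by
    intro v hv
    have hvb : W.mkQ v ∈ Submodule.span E (Set.range (W.mkQ ∘ e)) := by
      rw [hmkQ, Subtype.range_coe, hbspan]
      exact Submodule.subset_span ⟨v, hv, rfl⟩
    obtain ⟨c, hc⟩ := Finsupp.mem_span_range_iff_exists_finsupp.mp hvb
    have hmem : v - Finsupp.linearCombination E e c ∈ W := by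
      refine (Submodule.Quotient.mk_eq_zero W).mp ?_
      rw [← W.mkQ_apply, map_sub, Finsupp.apply_linearCombination,
        Finsupp.linearCombination_apply, hc, sub_self]
    rw [← sub_add_cancel v (Finsupp.linearCombination E e c)]
    exact Submodule.add_mem_sup (Submodule.subset_span
      ⟨hmem, sub_linearCombination_mem_fixedPoints hW hli he_fixed hv hmem⟩) ⟨c, rfl⟩
  intro w hw
  obtain ⟨w', hw', _, ⟨c, rfl⟩, rfl⟩ :=
    Submodule.mem_sup.mp (Submodule.span_le.mpr hfixed (hspan hw))
  have hw'W : w' ∈ W := Submodule.span_le.mpr Set.inter_subset_left hw'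
  have hc : Finsupp.linearCombination E (W.mkQ ∘ e) c = 0 := by
    rw [← Finsupp.apply_linearCombination]
    exact (Submodule.Quotient.mk_eq_zero W).mpr ((W.add_mem_iff_right hw'W).mp hw)
  rwa [linearIndependent_iff.mp hli c hc, map_zero, add_zero]

theorem mem_span_of_mem_fixedPoints {A : Type*} [CommSemiring A] [Algebra A E] [Module A V]
    [IsScalarTower A E V] (hA : MulAction.fixedPoints G E ⊆ Set.range (algebraMap A E)) {S : Set V}
    (hS : S ⊆ MulAction.fixedPoints G V) {v : V} (hv : v ∈ MulAction.fixedPoints G V)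
    (hvS : v ∈ Submodule.span E S) : v ∈ Submodule.span A S := by
  obtain ⟨b, hb, hbspan, hbli⟩ := exists_linearIndependent E S
  rw [← hbspan, Finsupp.mem_span_iff_linearCombination] at hvS
  obtain ⟨c, rfl⟩ := hvS
  refine Submodule.sum_mem _ fun i _ ↦ ?_
  obtain ⟨a, ha⟩ := hA fun g ↦
    smul_coeff_eq_of_linearCombination_eq hbli (funext fun i ↦ hS (hb i.2) g) (hv g) i
  simp only [LinearMap.smulRight_apply, LinearMap.id_apply, ← ha, algebraMap_smul]
  exact Submodule.smul_mem _ a (Submodule.subset_span (hb i.2))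

theorem mem_span_fixedPoints_of_finite_orbit {x : E} (hx : (MulAction.orbit G x).Finite) {f : V}
    (hf : ∀ g : G, g • x = x → g • f = f) :
    f ∈ Submodule.span E (MulAction.fixedPoints G V) := by
  classical
  have := hx.fintype
  obtain ⟨φ, hφ, hφx⟩ := exists_equivariant_orbit_map hf
  let x₀ : MulAction.orbit G x := ⟨x, MulAction.mem_orbit_self x⟩
  let ψ (n : ℕ) : V := ∑ y : MulAction.orbit G x, (y : E) ^ n • φ y
  have hψ (n : ℕ) : ψ n ∈ MulAction.fixedPoints G V := fun g ↦
    calc g • ψ n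
        = ∑ y : MulAction.orbit G x, ((g • y : MulAction.orbit G x) : E) ^ n • φ (g • y) := by
          simp only [ψ, Finset.smul_sum, smul_distrib_smul, smul_pow', hφ,
            MulAction.orbit.coe_smul]
      _ = ψ n := Equiv.sum_comp (MulAction.toPerm g)
          fun y : MulAction.orbit G x ↦ (y : E) ^ n • φ y
  let p := Lagrange.basis Finset.univ (Subtype.val : MulAction.orbit G x → E) x₀
  have hp (y : MulAction.orbit G x) : p.eval (y : E) = if y = x₀ then 1 else 0 := by
    split_ifs with h
    · rw [h]
      exact Lagrange.eval_basis_self Subtype.val_injective.injOn (Finset.mem_univ _)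
    · exact Lagrange.eval_basis_of_ne (Ne.symm h) (Finset.mem_univ _)
  have hfψ : f = p.sum fun n a ↦ a • ψ n :=
    calc f = ∑ y : MulAction.orbit G x, p.eval (y : E) • φ y := by simp [hp, x₀, hφx]
      _ = p.sum fun n a ↦ a • ψ n := by
        simp only [Polynomial.eval_eq_sum, Polynomial.sum_def, Finset.sum_smul, mul_smul, ψ,
          Finset.smul_sum]
        exact Finset.sum_comm
  rw [hfψ]
  exact Submodule.sum_mem _ fun n _ ↦ Submodule.smul_mem _ _ (Submodule.subset_span (hψ n))

theorem exists_polynomialModule_eval_smul (g : G) (P : PolynomialModule E V) :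
    ∃ Q : PolynomialModule E V, ∀ y : E,
      PolynomialModule.eval (g • y) Q = g • PolynomialModule.eval y P := by
  induction P using PolynomialModule.induction_linear with
  | zero => exact ⟨0, fun y ↦ by simp only [map_zero, smul_zero]⟩
  | add P₁ P₂ h₁ h₂ =>
    obtain ⟨Q₁, hQ₁⟩ := h₁
    obtain ⟨Q₂, hQ₂⟩ := h₂
    exact ⟨Q₁ + Q₂, fun y ↦ by simp only [map_add, hQ₁, hQ₂, smul_add]⟩
  | single n v =>
    exact ⟨.single E n (g • v), fun y ↦ by
      simp only [PolynomialModule.eval_single, smul_distrib_smul, smul_pow']⟩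

lemma smul_mem_span_fixedPoints (g : G) {v : V}
    (hv : v ∈ Submodule.span E (MulAction.fixedPoints G V)) :
    g • v ∈ Submodule.span E (MulAction.fixedPoints G V) := by
  induction hv using Submodule.span_induction with
  | mem v hv => exact Submodule.subset_span (by rwa [hv g])
  | zero => rw [smul_zero]; exact zero_mem _
  | add v w _ _ hv hw => rw [smul_add]; exact add_mem hv hw
  | smul a v _ hv => rw [smul_distrib_smul]; exact Submodule.smul_mem _ _ hv

theorem span_fixedPoints_eq_top_of_injective {U : Type*} [AddCommGroup U] [Module E U]
    [DistribMulAction G U] (f : U →ₗ[E] V) (hf : Function.Injective f)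
    (hfG : ∀ (g : G) u, f (g • u) = g • f u)
    (hspan : LinearMap.range f ≤ Submodule.span E (MulAction.fixedPoints G V)) :
    Submodule.span E (MulAction.fixedPoints G U) = ⊤ := by
  have hstable (g : G) : ∀ v ∈ LinearMap.range f, g • v ∈ LinearMap.range f := by
    rintro _ ⟨u, rfl⟩
    exact ⟨g • u, hfG g u⟩
  have hfixed : (LinearMap.range f ∩ MulAction.fixedPoints G V : Set V) ⊆
      f '' MulAction.fixedPoints G U := by
    rintro _ ⟨⟨u, rfl⟩, hu⟩
    exact ⟨u, fun g ↦ hf ((hfG g u).trans (hu g)), rfl⟩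
  refine top_unique fun u _ ↦ ?_
  have hu := Submodule.span_mono hfixed (le_span_inter_fixedPoints hstable hspan ⟨u, rfl⟩)
  rw [Submodule.span_image] at hu
  exact (Function.Injective.mem_set_image hf).mp hu

section RationalCurve

variable {t : E} {φ : MulAction.orbit G t → V} {d : Polynomial E} {P : PolynomialModule E V}

theorem eval_smul_smul_eval_eq {g : G} (hφ : ∀ y, φ (g • y) = g • φ y)
    (hgood : {y : MulAction.orbit G t | d.eval (y : E) • φ y = PolynomialModule.eval (y : E) P ∧
      d.eval ((g • y : MulAction.orbit G t) : E) • φ (g • y) =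
        PolynomialModule.eval ((g • y : MulAction.orbit G t) : E) P}.Infinite) (y : E) :
    d.eval (g • y) • g • PolynomialModule.eval y P =
      (g • d.eval y) • PolynomialModule.eval (g • y) P := by
  obtain ⟨Q, hQ⟩ := exists_polynomialModule_eval_smul g P
  have hgd (z : E) : (g • d).eval (g • z) = g • d.eval z := Polynomial.smul_eval_smul E g d z
  have hagree : {z : E | PolynomialModule.eval z (d • Q) =
      PolynomialModule.eval z ((g • d) • P)}.Infinite := by
    have hinj : Function.Injective fun y : MulAction.orbit G t ↦ g • (y : E) :=
      (MulAction.injective g).comp Subtype.val_injective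
    refine (hgood.image hinj.injOn).mono ?_
    rintro _ ⟨z, ⟨hz, hgz⟩, rfl⟩
    rw [MulAction.orbit.coe_smul, hφ] at hgz
    simp only [Set.mem_ofPred_eq, PolynomialModule.eval_smul, hQ, hgd]
    rw [← hz, ← hgz, smul_distrib_smul g (d.eval (z : E)), smul_comm]
  simpa only [PolynomialModule.eval_smul, hQ, hgd] using
    polynomialModule_eval_eq_of_infinite hagree (g • y)

theorem mem_span_fixedPoints_of_eval_smul_eq (hE : (MulAction.fixedPoints G E).Infinite)
    (hφ : ∀ (g : G) y, φ (g • y) = g • φ y) (hd : d ≠ 0)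
    (hgood : ∀ g : G,
      {y : MulAction.orbit G t | d.eval (y : E) • φ y = PolynomialModule.eval (y : E) P ∧
        d.eval ((g • y : MulAction.orbit G t) : E) • φ (g • y) =
          PolynomialModule.eval ((g • y : MulAction.orbit G t) : E) P}.Infinite)
    (y : MulAction.orbit G t) : φ y ∈ Submodule.span E (MulAction.fixedPoints G V) := by
  set W := Submodule.span E (MulAction.fixedPoints G V)
  have hroots : {a : E | d.IsRoot a}.Finite := Polynomial.finite_setOfPred_isRoot hd
  have hspecial : {a : E | PolynomialModule.eval a P ∈ W}.Infinite := by
    refine (hE.sdiff hroots).mono ?_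
    rintro a ⟨ha, hda⟩
    refine (Submodule.smul_mem_iff W (inv_ne_zero hda)).mp (Submodule.subset_span fun g ↦ ?_)
    have hg := eval_smul_smul_eval_eq (hφ g) (hgood g) a
    rw [ha g] at hg
    have hgda : g • d.eval a ≠ 0 := (smul_ne_zero_iff_ne g).mpr hda
    rw [smul_distrib_smul, smul_inv₀', inv_smul_eq_iff₀ hgda, smul_comm, ← hg,
      inv_smul_smul₀ hda]
  have hPW := polynomialModule_eval_mem_of_infinite hspecial
  obtain ⟨z, ⟨hz, -⟩, hdz⟩ := ((hgood 1).sdiff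
    (hroots.preimage Subtype.val_injective.injOn)).nonempty
  have hφz : φ z ∈ W := (Submodule.smul_mem_iff W hdz).mp (hz ▸ hPW z)
  obtain ⟨g, rfl⟩ : ∃ g : G, g • z = y := MulAction.exists_smul_eq G z y
  rw [hφ]
  exact smul_mem_span_fixedPoints g hφz

end RationalCurve

end SemilinearAction

universe v

theorem exists_ringEquiv_algebraMap_eq {R₁ R₂ : Type*} {K₁ K₂ : Type v} [CommRing R₁] [CommRing R₂]
    [Field K₁] [Field K₂] [Algebra R₁ K₁] [Algebra R₂ K₂] [FaithfulSMul R₁ K₁]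
    [FaithfulSMul R₂ K₂] [IsAlgClosed K₁] [IsAlgClosed K₂] (f : R₁ ≃+* R₂)
    (h : Algebra.trdeg R₁ K₁ = Algebra.trdeg R₂ K₂) :
    ∃ e : K₁ ≃+* K₂, ∀ r, e (algebraMap R₁ K₁ r) = algebraMap R₂ K₂ (f r) := by
  have := (FaithfulSMul.algebraMap_injective R₁ K₁).isDomain
  have := (FaithfulSMul.algebraMap_injective R₂ K₂).isDomain
  obtain ⟨s, hs⟩ := exists_isTranscendenceBasis R₁ K₁
  obtain ⟨t, ht⟩ := exists_isTranscendenceBasis R₂ K₂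
  rw [← hs.cardinalMk_eq_trdeg, ← ht.cardinalMk_eq_trdeg] at h
  obtain ⟨e⟩ := Cardinal.eq.mp h
  let S := Algebra.adjoin R₁ (Set.range ((↑) : s → K₁))
  let T := Algebra.adjoin R₂ (Set.range ((↑) : t → K₂))
  have : IsAlgClosure S K₁ := IsAlgClosed.isAlgClosure_of_transcendence_basis _ hs
  have : IsAlgClosure T K₂ := IsAlgClosed.isAlgClosure_of_transcendence_basis _ ht
  let g : S ≃+* T := hs.1.aevalEquiv.symm.toRingEquiv.trans <|
    (MvPolynomial.mapEquiv s f).trans <|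
      (MvPolynomial.renameEquiv R₂ e).toRingEquiv.trans ht.1.aevalEquiv.toRingEquiv
  have hg (r : R₁) : g (algebraMap R₁ S r) = algebraMap R₂ T (f r) := by
    calc g (algebraMap R₁ S r)
        = ht.1.aevalEquiv (MvPolynomial.rename e (MvPolynomial.map f
            (hs.1.aevalEquiv.symm (algebraMap R₁ S r)))) := rfl
      _ = ht.1.aevalEquiv (algebraMap R₂ (MvPolynomial t R₂) (f r)) := by
          rw [AlgEquiv.commutes, MvPolynomial.algebraMap_eq, MvPolynomial.map_C,
            MvPolynomial.rename_C, MvPolynomial.algebraMap_eq, RingHom.coe_coe]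
      _ = algebraMap R₂ T (f r) := AlgEquiv.commutes _ _
  refine ⟨IsAlgClosure.equivOfEquiv K₁ K₂ g, fun r ↦ ?_⟩
  rw [IsScalarTower.algebraMap_apply R₁ S K₁, IsAlgClosure.equivOfEquiv_algebraMap, hg,
    ← IsScalarTower.algebraMap_apply R₂ T K₂]

section InfiniteTranscendenceDegree

open IntermediateField

variable {k K : Type*} [Field k] [Field K] [Algebra k K]

theorem aleph0_le_trdeg (hK : ∀ L : IntermediateField k K, L.FG → ∃ x : K, Transcendental L x) :
    Cardinal.aleph0 ≤ Algebra.trdeg k K := by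
  by_contra! hlt
  obtain ⟨s, hs⟩ := exists_isTranscendenceBasis k K
  have hfin : s.Finite :=
    Cardinal.lt_aleph0_iff_set_finite.mp (hs.cardinalMk_eq_trdeg.trans_lt hlt)
  obtain ⟨x, hx⟩ := hK (adjoin k s) (fg_adjoin_of_finite hfin)
  have halg := hs.isAlgebraic_field
  rw [Subtype.range_coe] at halg
  exact hx (halg.isAlgebraic x)

theorem le_restrictScalars_adjoin (M : IntermediateField k K) (S : Set K) :
    M ≤ (adjoin M S).restrictScalars k :=
  fun x hx ↦ (adjoin M S).algebraMap_mem ⟨x, hx⟩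

theorem fg_restrictScalars_adjoin_simple {M : IntermediateField k K} (hM : M.FG) (x : K) :
    (M⟮x⟯.restrictScalars k).FG := by
  rw [restrictScalars_adjoin_eq_sup]
  exact fg_sup hM (fg_adjoin_of_finite (Set.finite_singleton x))

theorem smul_eq_of_smul_eq_of_mem_fixedPoints {M : IntermediateField k K} {V : Type*}
    [MulAction (K ≃ₐ[k] K) V] {x : K} {v : V}
    (hv : v ∈ MulAction.fixedPoints (M⟮x⟯.restrictScalars k).fixingSubgroup V)
    (σ : M.fixingSubgroup) (hσ : σ • x = x) : σ • v = v := by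
  have hadjoin := (forall_mem_adjoin_smul_eq_self_iff M (S := {x}) (fixingSubgroupEquiv M σ)).mpr
    (by rintro _ rfl; exact hσ)
  exact hv ⟨σ, (mem_fixingSubgroup_iff _ _).mpr hadjoin⟩

theorem aeval_fixingSubgroup_smul {F : IntermediateField k K} (ρ : F.fixingSubgroup)
    (y : K) (d : Polynomial F) :
    Polynomial.aeval (ρ • y) d = ρ • Polynomial.aeval y d :=
  Polynomial.aeval_algHom_apply (fixingSubgroupEquiv F ρ : K ≃ₐ[F] K) y d

theorem fg_map {M : IntermediateField k K} (hM : M.FG) (f : K →ₐ[k] K) : (M.map f).FG := by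
  obtain ⟨S, rfl⟩ := hM
  rw [adjoin_map]
  exact fg_adjoin_of_finite (S.finite_toSet.image f)

theorem transcendental_of_le {M N : IntermediateField k K} (h : M ≤ N) {x : K}
    (hx : Transcendental N x) : Transcendental M x :=
  Transcendental.of_tower_top_of_subalgebra_le (show M.toSubalgebra ≤ N.toSubalgebra from h) hx

theorem finite_orbit_fixingSubgroup {M : IntermediateField k K} {x : K}
    (hx : IsAlgebraic M x) :
    (MulAction.orbit M.fixingSubgroup x).Finite := by
  refine ((minpoly M x).rootSet_finite K).subset ?_
  rintro _ ⟨σ, rfl⟩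
  exact (isConjRoot_iff_mem_minpoly_rootSet hx.isIntegral).mp
    (isConjRoot_of_algEquiv x (fixingSubgroupEquiv M σ))

variable (hK : Cardinal.aleph0 ≤ Algebra.trdeg k K) {M : IntermediateField k K}

include hK

theorem trdeg_eq_of_fg (hM : M.FG) : Algebra.trdeg M K = Algebra.trdeg k K := by
  have hlt : Algebra.trdeg k M < Cardinal.aleph0 :=
    have := essFiniteType_iff.mpr hM
    trdeg_lt_aleph0 k M
  have hadd := _root_.trdeg_add_eq k M (A := K)
  have hle : Cardinal.aleph0 ≤ Algebra.trdeg M K := by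
    by_contra! h
    exact hK.not_gt (hadd ▸ Cardinal.add_lt_aleph0 hlt h)
  rw [← hadd, Cardinal.add_eq_right hle (hlt.le.trans hle)]

theorem infinite_setOf_transcendental : {y : K | Transcendental k y}.Infinite := by
  obtain ⟨s, hs⟩ := exists_isTranscendenceBasis k K
  rw [← hs.cardinalMk_eq_trdeg, Cardinal.aleph0_le_mk_iff, Set.infinite_coe_iff] at hK
  exact hK.mono fun y hy ↦ hs.1.transcendental ⟨y, hy⟩

theorem infinite_setOf_transcendental_and_smul (hM : M.FG)
    (g : K ≃ₐ[k] K) :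
    {y : K | Transcendental M y ∧ Transcendental M (g • y)}.Infinite := by
  have hN : (M ⊔ M.map (g⁻¹ : K ≃ₐ[k] K).toAlgHom).FG := fg_sup hM (fg_map hM _)
  refine (infinite_setOf_transcendental
    (hK.trans_eq (trdeg_eq_of_fg hK hN).symm)).mono fun y hy ↦ ⟨?_, ?_⟩
  · exact transcendental_of_le le_sup_left hy
  · have hgy : Transcendental (M.map (g⁻¹ : K ≃ₐ[k] K).toAlgHom)
        ((g⁻¹ : K ≃ₐ[k] K) (g • y)) := by
      rw [← AlgEquiv.smul_def, inv_smul_smul]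
      exact transcendental_of_le le_sup_right hy
    exact hgy.of_ringHom_of_comp_eq (intermediateFieldMap (g⁻¹ : K ≃ₐ[k] K) M)
      (g⁻¹ : K ≃ₐ[k] K) (EquivLike.injective _) rfl

variable [IsAlgClosed K]

theorem exists_algEquiv_extending {N : IntermediateField k K} (hM : M.FG) (hN : N.FG)
    (φ : M ≃ₐ[k] N) : ∃ σ : K ≃ₐ[k] K, ∀ x : M, σ x = φ x := by
  obtain ⟨e, he⟩ := exists_ringEquiv_algebraMap_eq (K₁ := K) (K₂ := K) φ.toRingEquiv
    (by rw [trdeg_eq_of_fg hK hM, trdeg_eq_of_fg hK hN])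
  refine ⟨AlgEquiv.ofRingEquiv (f := e) fun r ↦ ?_, he⟩
  exact (he (algebraMap k M r)).trans (congrArg Subtype.val (φ.commutes r))

theorem exists_algEquiv_apply_eq_of_adjoin_equiv {x y : K} (φ : k⟮x⟯ ≃ₐ[k] k⟮y⟯)
    (hφ : φ (AdjoinSimple.gen k x) = AdjoinSimple.gen k y) : ∃ σ : K ≃ₐ[k] K, σ x = y := by
  obtain ⟨σ, hσ⟩ := exists_algEquiv_extending hK (fg_adjoin_of_finite (Set.finite_singleton x))
    (fg_adjoin_of_finite (Set.finite_singleton y)) φ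
  exact ⟨σ, (hσ (AdjoinSimple.gen k x)).trans (congrArg Subtype.val hφ)⟩

theorem exists_algEquiv_apply_eq_of_isConjRoot {x y : K} (hx : IsAlgebraic k x)
    (hxy : IsConjRoot k x y) : ∃ σ : K ≃ₐ[k] K, σ x = y :=
  exists_algEquiv_apply_eq_of_adjoin_equiv hK (minpoly.algEquiv hx hxy)
    (minpoly.algEquiv_apply hx hxy)

theorem exists_algEquiv_apply_eq_of_transcendental {x y : K} (hx : Transcendental k x)
    (hy : Transcendental k y) : ∃ σ : K ≃ₐ[k] K, σ x = y :=
  exists_algEquiv_apply_eq_of_adjoin_equiv hK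
    ((RatFunc.algEquivOfTranscendental x hx).symm.trans (RatFunc.algEquivOfTranscendental y hy))
    (by simpa using Subtype.ext (RatFunc.algEquivOfTranscendental_X y hy))

theorem mem_bot_of_forall_algEquiv_apply_eq [PerfectField k] {x : K}
    (hx : ∀ σ : K ≃ₐ[k] K, σ x = x) : x ∈ (⊥ : Subalgebra k K) := by
  by_contra hbot
  by_cases halg : IsAlgebraic k x
  · obtain ⟨y, hxy, hconj⟩ := (notMem_iff_exists_ne_and_isConjRoot
      (PerfectField.separable_of_irreducible (minpoly.irreducible halg.isIntegral))
      (IsAlgClosed.splits _)).mp hbot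
    obtain ⟨σ, hσ⟩ := exists_algEquiv_apply_eq_of_isConjRoot hK halg hconj
    exact hxy ((hx σ).symm.trans hσ)
  · have hx1 : Transcendental k (x + 1) := fun h ↦ halg <| by
      simpa using h.sub (isAlgebraic_one (R := k) (A := K))
    obtain ⟨σ, hσ⟩ := exists_algEquiv_apply_eq_of_transcendental hK halg hx1
    exact one_ne_zero (left_eq_add.mp ((hx σ).symm.trans hσ))

theorem exists_fixingSubgroup_smul_eq_of_transcendental (hM : M.FG) {x y : K}
    (hx : Transcendental M x) (hy : Transcendental M y) :
    ∃ σ : M.fixingSubgroup, σ • x = y := by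
  obtain ⟨σ, hσ⟩ := exists_algEquiv_apply_eq_of_transcendental
    (hK.trans_eq (trdeg_eq_of_fg hK hM).symm) hx hy
  exact ⟨(fixingSubgroupEquiv M).symm σ, hσ⟩

theorem mem_of_mem_fixedPoints_fixingSubgroup [CharZero k] (hM : M.FG) {x : K}
    (hx : x ∈ MulAction.fixedPoints M.fixingSubgroup K) : x ∈ M := by
  have : CharZero M := charZero_of_injective_algebraMap (algebraMap k M).injective
  obtain ⟨y, rfl⟩ := Algebra.mem_bot.mp <| mem_bot_of_forall_algEquiv_apply_eq (k := M)
    (hK.trans_eq (trdeg_eq_of_fg hK hM).symm) fun σ ↦ hx ((fixingSubgroupEquiv M).symm σ)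
  exact y.2

end InfiniteTranscendenceDegree

section SpanFixedPoints

open IntermediateField

variable {k K V : Type*} [Field k] [Field K] [Algebra k K] [AddCommGroup V] [Module K V]
  [DistribMulAction (K ≃ₐ[k] K) V] [SMulDistribClass (K ≃ₐ[k] K) K V]
  {F M : IntermediateField k K}

theorem exists_aeval_smul_eq_eval {s : K} {v : V}
    (hv : v ∈ Submodule.span F⟮s⟯ (MulAction.fixedPoints F.fixingSubgroup V)) :
    ∃ (d : Polynomial F) (P : PolynomialModule K V),
      (∀ (ρ : F.fixingSubgroup) (y : K),
        PolynomialModule.eval (ρ • y) P = ρ • PolynomialModule.eval y P) ∧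
      Polynomial.aeval s d ≠ 0 ∧ Polynomial.aeval s d • v = PolynomialModule.eval s P := by
  induction hv using Submodule.span_induction with
  | mem v hv => exact ⟨1, .single K 0 v, fun ρ y ↦ by simp [hv ρ], by simp, by simp⟩
  | zero => exact ⟨1, 0, by simp, by simp, by simp⟩
  | add v w _ _ hv hw =>
    obtain ⟨d, P, hP, hd, hdv⟩ := hv
    obtain ⟨e, Q, hQ, he, hew⟩ := hw
    refine ⟨d * e, e.map (algebraMap F K) • P + d.map (algebraMap F K) • Q, fun ρ y ↦ ?_, ?_, ?_⟩
    · simp only [map_add, PolynomialModule.eval_smul, Polynomial.eval_map_algebraMap, hP, hQ,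
        aeval_fixingSubgroup_smul, smul_add, smul_distrib_smul]
    · rw [map_mul]
      exact mul_ne_zero hd he
    · simp only [map_add, map_mul, PolynomialModule.eval_smul, Polynomial.eval_map_algebraMap,
        ← hdv, ← hew, smul_smul, smul_add, mul_comm]
  | smul a v _ hv =>
    obtain ⟨d, P, hP, hd, hdv⟩ := hv
    obtain ⟨r, q, hrq⟩ := (mem_adjoin_simple_iff F _).mp a.2
    by_cases hq : Polynomial.aeval s q = 0
    · refine ⟨1, 0, by simp, by simp, ?_⟩
      have ha : a = 0 := Subtype.ext (by simpa [hq] using hrq)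
      simp [ha]
    · refine ⟨q * d, r.map (algebraMap F K) • P, fun ρ y ↦ ?_, ?_, ?_⟩
      · simp only [PolynomialModule.eval_smul, Polynomial.eval_map_algebraMap, hP,
          aeval_fixingSubgroup_smul, smul_distrib_smul]
      · rw [map_mul]
        exact mul_ne_zero hq hd
      · have hqa : Polynomial.aeval s q * (a : K) = Polynomial.aeval s r := by
          rw [hrq, mul_div_cancel₀ _ hq]
        rw [PolynomialModule.eval_smul, Polynomial.eval_map_algebraMap, ← hdv,
          IntermediateField.smul_def, map_mul, smul_smul, smul_smul, mul_right_comm, hqa]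

variable [CharZero k] [IsAlgClosed K]

theorem mem_span_adjoin_simple_fixedPoints (hK : Cardinal.aleph0 ≤ Algebra.trdeg k K)
    (hF : F.FG) {s : K} {v : V}
    (hv : v ∈ MulAction.fixedPoints (F⟮s⟯.restrictScalars k).fixingSubgroup V)
    (hspan : v ∈ Submodule.span K (MulAction.fixedPoints F.fixingSubgroup V)) :
    v ∈ Submodule.span F⟮s⟯ (MulAction.fixedPoints F.fixingSubgroup V) := by
  refine mem_span_of_mem_fixedPoints (G := (F⟮s⟯.restrictScalars k).fixingSubgroup)
    (fun a ha ↦ ⟨⟨a, ?_⟩, rfl⟩) (fun w (hw : ∀ ρ : F.fixingSubgroup, ρ • w = w) ρ ↦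
      hw ⟨ρ, fixingSubgroup_antitone (le_restrictScalars_adjoin F {s}) ρ.2⟩) hv hspan
  exact mem_of_mem_fixedPoints_fixingSubgroup hK (fg_restrictScalars_adjoin_simple hF s) ha

theorem exists_eval_smul_eq_eval_of_transcendental
    (hK : Cardinal.aleph0 ≤ Algebra.trdeg k K) (hM : M.FG) (hF : F.FG) (hMF : M ≤ F)
    (hspan : Submodule.span K (MulAction.fixedPoints F.fixingSubgroup V) = ⊤) {t : K}
    (ht : Transcendental M t) {φ : MulAction.orbit M.fixingSubgroup t → V}
    (hφ : ∀ (σ : M.fixingSubgroup) y, φ (σ • y) = σ • φ y) :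
    ∃ (d : Polynomial K) (P : PolynomialModule K V), d ≠ 0 ∧
      ∀ y : MulAction.orbit M.fixingSubgroup t, Transcendental F (y : K) →
        d.eval (y : K) • φ y = PolynomialModule.eval (y : K) P := by
  obtain ⟨s, hs⟩ := (infinite_setOf_transcendental
    (hK.trans_eq (trdeg_eq_of_fg hK hF).symm)).nonempty
  obtain ⟨τ, rfl⟩ := exists_fixingSubgroup_smul_eq_of_transcendental hK hM ht
    (transcendental_of_le hMF hs)
  let x : MulAction.orbit M.fixingSubgroup t := τ • ⟨t, MulAction.mem_orbit_self t⟩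
  have hφx : φ x ∈ MulAction.fixedPoints (F⟮τ • t⟯.restrictScalars k).fixingSubgroup V := by
    intro ρ
    have hle := hMF.trans (le_restrictScalars_adjoin F {τ • t})
    have hρx : (⟨ρ, fixingSubgroup_antitone hle ρ.2⟩ : M.fixingSubgroup) • x = x :=
      Subtype.ext ((mem_fixingSubgroup_iff _ _).mp ρ.2 _ (mem_adjoin_simple_self F _))
    exact (hφ _ x).symm.trans (congrArg φ hρx)
  obtain ⟨d, P, hP, hd, hdx⟩ := exists_aeval_smul_eq_eval <|
    mem_span_adjoin_simple_fixedPoints hK hF hφx (hspan ▸ Submodule.mem_top)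
  refine ⟨d.map (algebraMap F K), P, fun h ↦ hd ?_, fun y hy ↦ ?_⟩
  · rw [← Polynomial.eval_map_algebraMap, h, Polynomial.eval_zero]
  · obtain ⟨ρ, hρ⟩ := exists_fixingSubgroup_smul_eq_of_transcendental hK hF hs hy
    have hρx : (⟨ρ, fixingSubgroup_antitone hMF ρ.2⟩ : M.fixingSubgroup) • x = y :=
      Subtype.ext hρ
    have hφy : ρ • φ x = φ y := (hφ _ x).symm.trans (congrArg φ hρx)
    rw [Polynomial.eval_map_algebraMap, ← hρ, aeval_fixingSubgroup_smul, hP, ← hdx, ← hφy,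
      smul_distrib_smul ρ]

theorem mem_span_fixedPoints_fixingSubgroup_of_transcendental
    (hK : Cardinal.aleph0 ≤ Algebra.trdeg k K) (hM : M.FG) {t : K} (ht : Transcendental M t)
    (hspan : Submodule.span K
      (MulAction.fixedPoints (M⟮t⟯.restrictScalars k).fixingSubgroup V) = ⊤)
    {f : V} (hf : f ∈ MulAction.fixedPoints (M⟮t⟯.restrictScalars k).fixingSubgroup V) :
    f ∈ Submodule.span K (MulAction.fixedPoints M.fixingSubgroup V) := by
  obtain ⟨φ, hφ, rfl⟩ := exists_equivariant_orbit_map (smul_eq_of_smul_eq_of_mem_fixedPoints hf)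
  have hF := fg_restrictScalars_adjoin_simple hM t
  have hMF := le_restrictScalars_adjoin M {t}
  obtain ⟨d, P, hd, hdP⟩ :=
    exists_eval_smul_eq_eval_of_transcendental hK hM hF hMF hspan ht hφ
  have hfixed : (MulAction.fixedPoints M.fixingSubgroup K).Infinite := by
    refine (Set.infinite_range_of_injective (algebraMap k K).injective).mono ?_
    rintro _ ⟨a, rfl⟩ σ
    exact (σ : K ≃ₐ[k] K).commutes a
  refine mem_span_fixedPoints_of_eval_smul_eq (P := P) hfixed hφ hd (fun g ↦ ?_) _
  refine ((infinite_setOf_transcendental_and_smul hK hF g).preimage ?_).mono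
    fun y hy ↦ ⟨hdP y hy.1, hdP (g • y) hy.2⟩
  rw [Subtype.range_coe]
  exact fun y hy ↦ exists_fixingSubgroup_smul_eq_of_transcendental hK hM ht
    (transcendental_of_le hMF hy.1)

theorem span_fixedPoints_fixingSubgroup_eq_top_of_adjoin_simple
    (hK : Cardinal.aleph0 ≤ Algebra.trdeg k K) (hM : M.FG) {x : K}
    (hspan : Submodule.span K
      (MulAction.fixedPoints (M⟮x⟯.restrictScalars k).fixingSubgroup V) = ⊤) :
    Submodule.span K (MulAction.fixedPoints M.fixingSubgroup V) = ⊤ := by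
  refine top_unique (hspan ▸ Submodule.span_le.mpr fun f hf ↦ ?_)
  by_cases hx : IsAlgebraic M x
  · exact mem_span_fixedPoints_of_finite_orbit (finite_orbit_fixingSubgroup hx)
      (smul_eq_of_smul_eq_of_mem_fixedPoints hf)
  · exact mem_span_fixedPoints_fixingSubgroup_of_transcendental hK hM hx hspan hf

theorem span_fixedPoints_eq_top_of_fixingSubgroup (hK : Cardinal.aleph0 ≤ Algebra.trdeg k K)
    (hM : M.FG) (hspan : Submodule.span K (MulAction.fixedPoints M.fixingSubgroup V) = ⊤) :
    Submodule.span K (MulAction.fixedPoints (K ≃ₐ[k] K) V) = ⊤ := by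
  refine (induction_on_adjoin_fg (fun N ↦ N.FG ∧
    (Submodule.span K (MulAction.fixedPoints N.fixingSubgroup V) = ⊤ →
      Submodule.span K (MulAction.fixedPoints (K ≃ₐ[k] K) V) = ⊤))
    ⟨fg_bot, fun h ↦ ?_⟩ (fun N x hN ↦ ⟨fg_restrictScalars_adjoin_simple hN.1 x, fun h ↦
      hN.2 (span_fixedPoints_fixingSubgroup_eq_top_of_adjoin_simple hK hN.1 h)⟩) M hM).2 hspan
  refine top_unique (h ▸ Submodule.span_mono fun v hv σ ↦ hv ⟨σ, ?_⟩)
  rw [fixingSubgroup_bot]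
  exact Subgroup.mem_top σ

end SpanFixedPoints

section FixedPointsBaseChange

theorem isBaseChange_subtype_span_range_basis {A E V ι : Type*} [CommRing A] [CommRing E]
    [Algebra A E] [FaithfulSMul A E] [AddCommGroup V] [Module E V] [Module A V]
    [IsScalarTower A E V] (b : Module.Basis ι E V) :
    IsBaseChange E (Submodule.span A (Set.range b)).subtype := by
  have hb : LinearIndependent A b := b.linearIndependent.restrict_scalars' A
  have hcomp : (Submodule.span A (Set.range b)).subtype =
      (Finsupp.linearCombination A b).comp (Module.Basis.span hb).repr.toLinearMap :=
    (Module.Basis.span hb).ext fun i ↦ by simp [Module.Basis.span_apply]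
  rw [hcomp]
  exact (IsBaseChange.of_basis A b).comp_equiv _ _

variable {G A E : Type*} [Group G] [CommRing A] [Field E] [MulSemiringAction G E]

section Ideal

variable {B : Type*} [CommRing B] [Algebra E B] [Algebra A B] [MulSemiringAction G B]
  [SMulDistribClass G E B] [SMulCommClass G A B]

variable (A) in
theorem le_map_comap_fixedPoints_subalgebra
    (hspan : Submodule.span E (MulAction.fixedPoints G B) = ⊤) {I : Ideal B}
    (hI : ∀ g : G, ∀ b ∈ I, g • b ∈ I) :
    I ≤ (I.comap (algebraMap (FixedPoints.subalgebra A B G) B)).map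
      (algebraMap (FixedPoints.subalgebra A B G) B) := by
  intro x hx
  have hIspan := le_span_inter_fixedPoints (W := I.restrictScalars E) hI (hspan ▸ le_top)
  refine (Submodule.span_le (p := Submodule.restrictScalars E (Ideal.map _ _))).2 ?_ (hIspan hx)
  rintro v ⟨hvI, hv⟩
  let v₀ : FixedPoints.subalgebra A B G := ⟨v, hv⟩
  exact Ideal.mem_map_of_mem _ (show v₀ ∈ I.comap (algebraMap _ B) from hvI)

end Ideal

variable [Algebra A E] [FaithfulSMul A E]

theorem isBaseChange_subtype_of_span_fixedPoints_eq_top {V : Type*} [AddCommGroup V]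
    [Module E V] [Module A V] [IsScalarTower A E V] [DistribMulAction G V]
    [SMulDistribClass G E V] (hA : MulAction.fixedPoints G E ⊆ Set.range (algebraMap A E))
    (hspan : Submodule.span E (MulAction.fixedPoints G V) = ⊤) {V₀ : Submodule A V}
    (hV₀ : (V₀ : Set V) = MulAction.fixedPoints G V) : IsBaseChange E V₀.subtype := by
  obtain ⟨S, hS, hSspan, hSli⟩ := exists_linearIndependent E (MulAction.fixedPoints G V)
  rw [hspan] at hSspan
  let b := Module.Basis.mk hSli (by rw [Subtype.range_val, hSspan])
  have hb : Set.range b = S := by rw [Module.Basis.coe_mk, Subtype.range_val]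
  have hV₀span : V₀ = Submodule.span A (Set.range b) := by
    rw [hb]
    refine le_antisymm (fun v hv ↦ ?_) (Submodule.span_le.2 (hS.trans hV₀.ge))
    exact mem_span_of_mem_fixedPoints hA hS (hV₀.le hv) (hSspan ▸ Submodule.mem_top)
  rw [hV₀span]
  exact isBaseChange_subtype_span_range_basis b

theorem isPushout_fixedPoints_subalgebra {B : Type*} [CommRing B] [Algebra E B]
    [Algebra A B] [IsScalarTower A E B] [MulSemiringAction G B] [SMulDistribClass G E B]
    [SMulCommClass G A B] (hA : MulAction.fixedPoints G E ⊆ Set.range (algebraMap A E))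
    (hspan : Submodule.span E (MulAction.fixedPoints G B) = ⊤) :
    Algebra.IsPushout A E (FixedPoints.subalgebra A B G) B :=
  ⟨isBaseChange_subtype_of_span_fixedPoints_eq_top hA hspan
    (V₀ := (FixedPoints.subalgebra A B G).toSubmodule) rfl⟩

end FixedPointsBaseChange

section Continuous

theorem adjoin_le_span_fixedPoints {G R A : Type*} [Monoid G] [CommSemiring R] [Semiring A]
    [Algebra R A] [MulSemiringAction G A] {S : Set A} (hS : S ⊆ MulAction.fixedPoints G A) :
    Subalgebra.toSubmodule (Algebra.adjoin R S) ≤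
      Submodule.span R (MulAction.fixedPoints G A) := by
  rw [Algebra.adjoin_eq_span]
  exact Submodule.span_mono (Submonoid.closure_le.2 hS : _ ≤ FixedPoints.submonoid G A)

variable {k K : Type*} [Field k] [Field K] [Algebra k K]

theorem exists_fg_subset_fixedPoints_of_finite {X : Type*} [MulAction (K ≃ₐ[k] K) X]
    (hX : ∀ x : X, ∃ L : IntermediateField k K, L.FG ∧
      x ∈ MulAction.fixedPoints L.fixingSubgroup X) {S : Set X} (hS : S.Finite) :
    ∃ M : IntermediateField k K, M.FG ∧ S ⊆ MulAction.fixedPoints M.fixingSubgroup X := by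
  choose L hL hLX using hX
  have := hS.to_subtype
  refine ⟨⨆ x : S, L x, IntermediateField.fg_iSup fun x ↦ hL x, fun x hx σ ↦ ?_⟩
  have hle : L x ≤ ⨆ x : S, L x := le_iSup (fun x : S ↦ L x) ⟨x, hx⟩
  exact hLX x ⟨σ, IntermediateField.fixingSubgroup_antitone hle σ.2⟩

theorem span_fixedPoints_eq_top_of_range_le_range {A V U : Type*} [CharZero k] [IsAlgClosed K]
    [CommRing A] [Algebra K A] [Algebra.FiniteType K A] [Ring V] [Algebra K V]
    [MulSemiringAction (K ≃ₐ[k] K) V] [SMulDistribClass (K ≃ₐ[k] K) K V]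
    [AddCommGroup U] [Module K U] [DistribMulAction (K ≃ₐ[k] K) U]
    [SMulDistribClass (K ≃ₐ[k] K) K U] (hK : Cardinal.aleph0 ≤ Algebra.trdeg k K)
    (hV : ∀ v : V, ∃ L : IntermediateField k K, L.FG ∧
      v ∈ MulAction.fixedPoints L.fixingSubgroup V)
    (f : U →ₗ[K] V) (hf : Function.Injective f) (hfσ : ∀ (σ : K ≃ₐ[k] K) u, f (σ • u) = σ • f u)
    (g : A →ₐ[K] V) (hfg : Set.range f ⊆ Set.range g) :
    Submodule.span K (MulAction.fixedPoints (K ≃ₐ[k] K) U) = ⊤ := by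
  obtain ⟨S, hS⟩ := Algebra.FiniteType.out (R := K) (A := A)
  obtain ⟨M, hM, hMS⟩ := exists_fg_subset_fixedPoints_of_finite hV (S.finite_toSet.image g)
  have hrange : Subalgebra.toSubmodule g.range ≤
      Submodule.span K (MulAction.fixedPoints M.fixingSubgroup V) := by
    rw [← Algebra.map_top, ← hS, AlgHom.map_adjoin]
    exact adjoin_le_span_fixedPoints hMS
  refine span_fixedPoints_eq_top_of_fixingSubgroup hK hM ?_
  exact span_fixedPoints_eq_top_of_injective f hf (fun σ u ↦ hfσ σ u) fun v hv ↦ hrange (hfg hv)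

end Continuous

section Schemes

/-- The ring homomorphism `R ⟶ Γ(Y, ⊤)` corresponding to a morphism `Y ⟶ Spec R`. -/
def toSections {R : CommRingCat} {Y : Scheme} (p : Y ⟶ Spec R) : R ⟶ Γ(Y, ⊤) :=
  (Scheme.ΓSpecIso R).inv ≫ p.appTop

variable {R S : CommRingCat} {X Y : Scheme}

theorem toSections_comp (f : X ⟶ Y) (p : Y ⟶ Spec R) :
    toSections (f ≫ p) = toSections p ≫ f.appTop := by
  rw [toSections, toSections, Scheme.Hom.comp_appTop, Category.assoc]

theorem toSections_comp_SpecMap (p : Y ⟶ Spec S) (φ : R ⟶ S) :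
    toSections (p ≫ Spec.map φ) = φ ≫ toSections p := by
  rw [toSections, toSections, Scheme.Hom.comp_appTop, ← Category.assoc, ← Category.assoc,
    Scheme.ΓSpecIso_inv_naturality]

theorem toSpecΓ_comp_SpecMap_toSections (p : Y ⟶ Spec R) :
    Y.toSpecΓ ≫ Spec.map (toSections p) = p := by
  rw [toSections, Spec.map_comp, ← Scheme.toSpecΓ_naturality_assoc, toSpecΓ_SpecMap_ΓSpecIso_inv,
    Category.comp_id]

theorem exists_opens_finiteType_toSections (p : Y ⟶ Spec R) [LocallyOfFiniteType p] (y : Y) :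
    ∃ U : Y.Opens, y ∈ U ∧
      (toSections p ≫ Y.presheaf.map (homOfLE (le_top (a := U))).op).hom.FiniteType := by
  obtain ⟨U, hU, hyU, -⟩ := exists_isAffineOpen_mem_and_subset (x := y) (U := ⊤) trivial
  have hR : (Scheme.ΓSpecIso R).inv.hom.FiniteType := RingHom.FiniteType.of_surjective _
    (Scheme.ΓSpecIso R).symm.commRingCatIsoToRingEquiv.surjective
  refine ⟨U, hyU, ?_⟩
  rw [toSections, Category.assoc]
  exact (p.finiteType_appLE (isAffineOpen_top _) hU le_top).comp hR

theorem germ_comp_eqToHom {x y : Y} (h : x = y) (U : Y.Opens) (hx : x ∈ U) :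
    Y.presheaf.germ U x hx ≫ eqToHom (congrArg Y.presheaf.stalk h) =
      Y.presheaf.germ U y (h ▸ hx) := by
  subst h
  simp

theorem app_comp_germ_congr {f g : X ⟶ Y} (h : f = g) (U : Y.Opens) {x : X} (hx : x ∈ f ⁻¹ᵁ U) :
    f.app U ≫ X.presheaf.germ (f ⁻¹ᵁ U) x hx =
      g.app U ≫ X.presheaf.germ (g ⁻¹ᵁ U) x (h ▸ hx) := by
  subst h
  rfl

theorem genericPoint_mem_preimage [IrreducibleSpace Y] (e : Y ≅ Y) {U : Y.Opens}
    (hU : genericPoint Y ∈ U) : genericPoint Y ∈ e.hom ⁻¹ᵁ U :=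
  (congrArg (· ∈ U) (aut_base_genericPoint e)).mpr hU

end Schemes

section DescentDatum

variable {Y : Scheme} {p : Y ⟶ Spec (CommRingCat.of K)} (D : DescentDatum k K Y p)

theorem DescentDatum.act_one_inv_hom : (D.act 1⁻¹ : Aut Y).hom = 𝟙 Y := by
  rw [inv_one, map_one]
  rfl

theorem DescentDatum.act_mul_inv_hom (σ τ : K ≃ₐ[k] K) :
    (D.act (σ * τ)⁻¹ : Aut Y).hom = (D.act σ⁻¹ : Aut Y).hom ≫ (D.act τ⁻¹ : Aut Y).hom := by
  rw [mul_inv_rev, map_mul, Aut.Aut_mul_def]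
  rfl

theorem DescentDatum.toSections_comp_appTop (σ : K ≃ₐ[k] K) :
    toSections p ≫ (D.act σ⁻¹ : Aut Y).hom.appTop =
      CommRingCat.ofHom (σ : K →+* K) ≫ toSections p := by
  rw [← toSections_comp, D.compat, specAut, toSections_comp_SpecMap, inv_inv]

/-- The global sections of `Y`, as a type synonym carrying the `K`-algebra structure given by `p`
and the action of `Aut(K/k)` given by `D`, where `σ` acts by pullback along the action of `σ⁻¹`. -/
def DescentDatum.GlobalSections (_D : DescentDatum k K Y p) : Type :=
  Γ(Y, ⊤)

namespace DescentDatum.GlobalSections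

instance : CommRing D.GlobalSections :=
  inferInstanceAs (CommRing Γ(Y, ⊤))

instance : Algebra K D.GlobalSections :=
  (toSections p).hom.toAlgebra

instance : Algebra k D.GlobalSections :=
  ((toSections p).hom.comp (algebraMap k K)).toAlgebra

instance : IsScalarTower k K D.GlobalSections :=
  IsScalarTower.of_algebraMap_eq fun _ ↦ rfl

instance : MulSemiringAction (K ≃ₐ[k] K) D.GlobalSections :=
  MulSemiringAction.compHom (M := D.GlobalSections →+* D.GlobalSections) _
    { toFun := fun σ ↦ (D.act σ⁻¹ : Aut Y).hom.appTop.hom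
      map_one' := by rw [act_one_inv_hom, Scheme.Hom.id_appTop]; rfl
      map_mul' := fun σ τ ↦ by rw [act_mul_inv_hom, Scheme.Hom.comp_appTop]; rfl }

theorem smul_algebraMap (σ : K ≃ₐ[k] K) (a : K) :
    σ • algebraMap K D.GlobalSections a = algebraMap K D.GlobalSections (σ a) :=
  congrArg (fun φ ↦ φ.hom a) (D.toSections_comp_appTop σ)

instance : SMulDistribClass (K ≃ₐ[k] K) K D.GlobalSections where
  smul_distrib_smul σ a f := by
    rw [Algebra.smul_def, smul_mul', smul_algebraMap, AlgEquiv.smul_def, Algebra.smul_def]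

instance : SMulCommClass (K ≃ₐ[k] K) k D.GlobalSections where
  smul_comm σ a f := by
    rw [← algebraMap_smul K a f, smul_distrib_smul, AlgEquiv.smul_def, AlgEquiv.commutes,
      algebraMap_smul]

end DescentDatum.GlobalSections

variable [IrreducibleSpace Y]

theorem DescentDatum.germ_comp_ffAction (σ : K ≃ₐ[k] K) {U : Y.Opens} (hU : genericPoint Y ∈ U) :
    Y.presheaf.germ U (genericPoint Y) hU ≫ D.ffAction σ =
      (D.act σ⁻¹ : Aut Y).hom.app U ≫ Y.presheaf.germ ((D.act σ⁻¹ : Aut Y).hom ⁻¹ᵁ U)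
        (genericPoint Y) (genericPoint_mem_preimage (D.act σ⁻¹) hU) := by
  rw [DescentDatum.ffAction, ← Category.assoc,
    germ_comp_eqToHom (aut_base_genericPoint (D.act σ⁻¹)).symm]
  exact Scheme.Hom.germ_stalkMap _ U (genericPoint Y) _

theorem DescentDatum.ffAction_one : D.ffAction 1 = 𝟙 Y.functionField := by
  refine TopCat.Presheaf.stalk_hom_ext _ fun U hU ↦ ?_
  rw [germ_comp_ffAction, app_comp_germ_congr D.act_one_inv_hom]
  exact (Category.id_comp _).trans (Category.comp_id _).symm

theorem DescentDatum.ffAction_mul (σ τ : K ≃ₐ[k] K) :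
    D.ffAction (σ * τ) = D.ffAction τ ≫ D.ffAction σ := by
  refine TopCat.Presheaf.stalk_hom_ext _ fun U hU ↦ ?_
  rw [germ_comp_ffAction, app_comp_germ_congr (D.act_mul_inv_hom σ τ), ← Category.assoc,
    germ_comp_ffAction, Category.assoc, germ_comp_ffAction, Scheme.Hom.comp_app]
  exact Category.assoc _ _ _

/-- The function field of `Y`, as a type synonym carrying the `K`-algebra structure given by `p`
and the action of `Aut(K/k)` given by `D`. -/
def DescentDatum.FunctionField (_D : DescentDatum k K Y p) : Type :=
  Y.functionField

namespace DescentDatum.FunctionField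

instance : CommRing D.FunctionField :=
  inferInstanceAs (CommRing Y.functionField)

instance : Algebra K D.FunctionField :=
  (toSections p ≫ Y.presheaf.germ ⊤ (genericPoint Y) trivial).hom.toAlgebra

instance : MulSemiringAction (K ≃ₐ[k] K) D.FunctionField :=
  MulSemiringAction.compHom (M := D.FunctionField →+* D.FunctionField) _
    { toFun := fun σ ↦ (D.ffAction σ).hom
      map_one' := by rw [ffAction_one]; rfl
      map_mul' := fun σ τ ↦ by rw [ffAction_mul]; rfl }

end DescentDatum.FunctionField

/-- The value of a global section of `Y` at the generic point. -/
def DescentDatum.germGenericPoint : D.GlobalSections →ₐ[K] D.FunctionField where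
  __ := (Y.presheaf.germ ⊤ (genericPoint Y) trivial).hom
  commutes' _ := rfl

namespace DescentDatum

theorem germGenericPoint_smul (σ : K ≃ₐ[k] K) (f : D.GlobalSections) :
    D.germGenericPoint (σ • f) = σ • D.germGenericPoint f :=
  (congrArg (fun φ ↦ φ.hom f) (D.germ_comp_ffAction σ (U := ⊤) trivial)).symm

instance : SMulDistribClass (K ≃ₐ[k] K) K D.FunctionField where
  smul_distrib_smul σ a f := by
    rw [Algebra.smul_def, smul_mul', ← D.germGenericPoint.commutes, ← germGenericPoint_smul,
      GlobalSections.smul_algebraMap, AlgHom.commutes, AlgEquiv.smul_def, Algebra.smul_def]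

theorem exists_finiteType_range_germGenericPoint_subset [LocallyOfFiniteType p] :
    ∃ (A : Type) (_ : CommRing A) (_ : Algebra K A) (_ : Algebra.FiniteType K A)
      (g : A →ₐ[K] D.FunctionField), Set.range D.germGenericPoint ⊆ Set.range g := by
  obtain ⟨U, hU, hUfin⟩ := exists_opens_finiteType_toSections p (genericPoint Y)
  let res := Y.presheaf.map (homOfLE (le_top (a := U))).op
  let germ := Y.presheaf.germ U (genericPoint Y) hU
  have hgerm : res ≫ germ = Y.presheaf.germ ⊤ (genericPoint Y) trivial :=
    TopCat.Presheaf.germ_res _ _ _ _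
  have hcomp : (toSections p ≫ res) ≫ germ =
      toSections p ≫ Y.presheaf.germ ⊤ (genericPoint Y) trivial := by
    rw [Category.assoc, hgerm]
  let _ : Algebra K Γ(Y, U) := (toSections p ≫ res).hom.toAlgebra
  refine ⟨Γ(Y, U), inferInstance, inferInstance, hUfin,
    { (germ.hom : Γ(Y, U) →+* D.FunctionField) with
      commutes' := fun a ↦ congrArg (fun φ ↦ φ.hom a) hcomp }, ?_⟩
  rintro _ ⟨f, rfl⟩
  exact ⟨res f, congrArg (fun φ ↦ φ.hom f) hgerm⟩

end DescentDatum

end DescentDatum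

section QuasiAffineDescent

theorem exists_opens_comap_eq_of_vanishingIdeal_le {R S : Type*} [CommRing R] [CommRing S]
    (f : R →+* S) (U : TopologicalSpace.Opens (PrimeSpectrum S))
    (hU : PrimeSpectrum.vanishingIdeal (U : Set (PrimeSpectrum S))ᶜ ≤
      ((PrimeSpectrum.vanishingIdeal (U : Set (PrimeSpectrum S))ᶜ).comap f).map f) :
    ∃ X : TopologicalSpace.Opens (PrimeSpectrum R),
      (U : Set (PrimeSpectrum S)) = PrimeSpectrum.comap f ⁻¹' X := by
  set I := PrimeSpectrum.vanishingIdeal (U : Set (PrimeSpectrum S))ᶜ with hI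
  refine ⟨⟨(PrimeSpectrum.zeroLocus (I.comap f))ᶜ,
    (PrimeSpectrum.isClosed_zeroLocus _).isOpen_compl⟩, ?_⟩
  rw [← compl_inj_iff]
  calc (U : Set (PrimeSpectrum S))ᶜ = PrimeSpectrum.zeroLocus I := by
        rw [hI, PrimeSpectrum.zeroLocus_vanishingIdeal_eq_closure,
          U.isOpen.isClosed_compl.closure_eq]
    _ = PrimeSpectrum.zeroLocus ((I.comap f).map f : Ideal S) := by
        rw [le_antisymm Ideal.map_comap_le hU]
    _ = PrimeSpectrum.comap f ⁻¹' PrimeSpectrum.zeroLocus (I.comap f) := by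
        rw [Ideal.map, PrimeSpectrum.zeroLocus_span, PrimeSpectrum.preimage_comap_zeroLocus]
    _ = _ := by rw [TopologicalSpace.Opens.coe_mk, Set.preimage_compl, compl_compl]

variable {Y : Scheme}

theorem mem_range_toSpecΓ_of_map_appTop_mem (e : Y ≅ Y) {x : Spec Γ(Y, ⊤)}
    (hx : Spec.map e.hom.appTop x ∈ Set.range Y.toSpecΓ) : x ∈ Set.range Y.toSpecΓ := by
  obtain ⟨y, hy⟩ := hx
  refine ⟨e.inv y, ?_⟩
  calc Y.toSpecΓ (e.inv y) = Spec.map e.inv.appTop (Y.toSpecΓ y) := by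
        rw [← Scheme.Hom.comp_apply, ← Scheme.Hom.comp_apply, Scheme.toSpecΓ_naturality]
    _ = x := by
        rw [hy, ← Scheme.Hom.comp_apply, ← Spec.map_comp, ← Scheme.Hom.comp_appTop, e.hom_inv_id]
        simp

theorem appTop_mem_vanishingIdeal_compl_range (e : Y ≅ Y) {f : Γ(Y, ⊤)}
    (hf : f ∈ PrimeSpectrum.vanishingIdeal (R := Γ(Y, ⊤)) (Set.range Y.toSpecΓ)ᶜ) :
    e.hom.appTop f ∈ PrimeSpectrum.vanishingIdeal (R := Γ(Y, ⊤)) (Set.range Y.toSpecΓ)ᶜ := by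
  rw [PrimeSpectrum.mem_vanishingIdeal] at hf ⊢
  exact fun x hx ↦ hf _ (mt (mem_range_toSpecΓ_of_map_appTop_mem e) hx)

theorem exists_isPullback_opens_of_isPushout {A B C : CommRingCat} {p : Y ⟶ Spec B}
    [IsOpenImmersion Y.toSpecΓ] {f : A ⟶ B} {g : A ⟶ C} {i : C ⟶ Γ(Y, ⊤)}
    (hpo : IsPushout f g (toSections p) i) {X : (Spec C).Opens}
    (hX : Y.toSpecΓ.opensRange = Spec.map i ⁻¹ᵁ X) :
    ∃ r : Y ⟶ X, r ≫ X.ι = Y.toSpecΓ ≫ Spec.map i ∧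
      IsPullback r p (X.ι ≫ Spec.map g) (Spec.map f) := by
  have hrange : Set.range (Y.toSpecΓ ≫ Spec.map i) ⊆ Set.range X.ι := by
    rw [Scheme.Opens.range_ι]
    rintro _ ⟨y, rfl⟩
    rw [Scheme.Hom.comp_apply]
    exact hX.le ⟨y, rfl⟩
  have hr := IsOpenImmersion.lift_fac X.ι (Y.toSpecΓ ≫ Spec.map i) hrange
  refine ⟨_, hr, ?_⟩
  have hopen := IsOpenImmersion.isPullback _ _ _ _ hr.symm (by rw [hX, X.opensRange_ι])
  have hpaste := hopen.flip.paste_horiz (isPullback_SpecMap_of_isPushout _ _ _ _ hpo)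
  rw [toSpecΓ_comp_SpecMap_toSections] at hpaste
  exact hpaste.flip

theorem quasiAffineOver_of_isPullback {p : Y ⟶ Spec (CommRingCat.of K)} [LocallyOfFiniteType p]
    [CompactSpace Y] {B : CommRingCat} {X : (Spec B).Opens} {g : CommRingCat.of k ⟶ B} {r : Y ⟶ X}
    (hr : IsPullback r p (X.ι ≫ Spec.map g) (Spec.map (CommRingCat.ofHom (algebraMap k K)))) :
    QuasiAffineOver k (X.ι ≫ Spec.map g) := by
  have hsurj : Surjective (Spec.map (CommRingCat.ofHom (algebraMap k K))) :=
    ⟨fun x ↦ ⟨default, Subsingleton.elim (α := PrimeSpectrum k) _ _⟩⟩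
  have hflat : Flat (Spec.map (CommRingCat.ofHom (algebraMap k K))) :=
    Flat.SpecMap_iff.2 ((RingHom.flat_algebraMap_iff (R := k) (S := K)).2 inferInstance)
  have hrsurj : Surjective r := MorphismProperty.of_isPullback hr.flip hsurj
  have : CompactSpace X.toScheme := hrsurj.surj.compactSpace r.continuous
  refine ⟨?_, quasiCompact_of_compactSpace _, _, Spec.map g, X.ι, inferInstance, inferInstance, rfl⟩
  exact MorphismProperty.of_isPullback_of_descendsAlong (P := @LocallyOfFiniteType)
    (Q := @Surjective ⊓ @Flat ⊓ @QuasiCompact) hr.flip ⟨⟨hsurj, hflat⟩, inferInstance⟩ ‹_›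

theorem comp_isoPullback_hom_eq_map {C : Type*} [Category* C] {P A B S : C} {fst : P ⟶ A}
    {snd : P ⟶ B} {f : A ⟶ S} {g : B ⟶ S} [HasPullback f g] (h : IsPullback fst snd f g)
    {a : P ⟶ P} {b : A ⟶ A} {c : B ⟶ B} {d : S ⟶ S} (hf : f ≫ d = b ≫ f) (hg : g ≫ d = c ≫ g)
    (hfst : a ≫ fst = fst ≫ b) (hsnd : a ≫ snd = snd ≫ c) :
    a ≫ h.isoPullback.hom = h.isoPullback.hom ≫ pullback.map f g f g b c d hf hg := by
  refine pullback.hom_ext ?_ ?_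
  · rw [Category.assoc, Category.assoc, h.isoPullback_hom_fst, hfst, pullback.map,
      pullback.lift_fst, h.isoPullback_hom_fst_assoc]
  · rw [Category.assoc, Category.assoc, h.isoPullback_hom_snd, hsnd, pullback.map,
      pullback.lift_snd, h.isoPullback_hom_snd_assoc]

theorem comp_isoPullback_hom_eq_baseChangeAut {X : Scheme} {q : X ⟶ Spec (CommRingCat.of k)}
    {p : Y ⟶ Spec (CommRingCat.of K)} {r : Y ⟶ X}
    (hr : IsPullback r p q (Spec.map (CommRingCat.ofHom (algebraMap k K)))) {σ : K ≃ₐ[k] K}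
    {a : Y ⟶ Y} (har : a ≫ r = r) (hap : a ≫ p = p ≫ specAut k K σ) :
    a ≫ hr.isoPullback.hom = hr.isoPullback.hom ≫ baseChangeAut k K q σ :=
  comp_isoPullback_hom_eq_map hr (b := 𝟙 X) (d := 𝟙 _) (by simp)
    (by rw [Category.comp_id, specAut_comp]) (by rw [har, Category.comp_id]) hap

namespace DescentDatum

variable {p : Y ⟶ Spec (CommRingCat.of K)} (D : DescentDatum k K Y p)

theorem span_fixedPoints_globalSections_eq_top [CharZero k] [IsAlgClosed K] [IsIntegral Y]
    [LocallyOfFiniteType p] (hK : Cardinal.aleph0 ≤ Algebra.trdeg k K) (hD : D.IsContinuous) :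
    Submodule.span K (MulAction.fixedPoints (K ≃ₐ[k] K) D.GlobalSections) = ⊤ := by
  obtain ⟨A, _, _, _, g, hg⟩ := D.exists_finiteType_range_germGenericPoint_subset
  refine span_fixedPoints_eq_top_of_range_le_range hK (fun f ↦ ?_) D.germGenericPoint.toLinearMap
    (germ_injective_of_isIntegral Y (U := ⊤) (genericPoint Y) trivial) D.germGenericPoint_smul g hg
  obtain ⟨L, hL, hLf⟩ := hD f
  exact ⟨L, hL, fun σ ↦ hLf σ fun x hx ↦ (mem_fixingSubgroup_iff _).1 σ.2 x hx⟩

/-- The `k`-algebra of `Aut(K/k)`-invariant global sections, whose spectrum contains the descended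
scheme as an open subscheme. -/
abbrev invariantSections : Subalgebra k D.GlobalSections :=
  FixedPoints.subalgebra k D.GlobalSections (K ≃ₐ[k] K)

/-- The inclusion of the invariant global sections into `Γ(Y, ⊤)`. -/
def invariantSectionsι : CommRingCat.of D.invariantSections ⟶ Γ(Y, ⊤) :=
  CommRingCat.ofHom (algebraMap D.invariantSections D.GlobalSections)

theorem invariantSectionsι_comp_appTop (σ : K ≃ₐ[k] K) :
    D.invariantSectionsι ≫ (D.act σ : Aut Y).hom.appTop = D.invariantSectionsι := by
  obtain ⟨τ, rfl⟩ := inv_surjective σ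
  ext f
  exact f.2 τ

theorem isPushout_invariantSectionsι [PerfectField k] [IsAlgClosed K]
    (hK : Cardinal.aleph0 ≤ Algebra.trdeg k K)
    (hspan : Submodule.span K (MulAction.fixedPoints (K ≃ₐ[k] K) D.GlobalSections) = ⊤) :
    IsPushout (CommRingCat.ofHom (algebraMap k K))
      (CommRingCat.ofHom (algebraMap k D.invariantSections)) (toSections p)
      D.invariantSectionsι := by
  have := isPushout_fixedPoints_subalgebra (A := k)
    (fun x hx ↦ Algebra.mem_bot.1 (mem_bot_of_forall_algEquiv_apply_eq hK hx)) hspan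
  exact CommRingCat.isPushout_of_isPushout k K D.invariantSections D.GlobalSections

theorem exists_opensRange_toSpecΓ_eq_preimage [IsOpenImmersion Y.toSpecΓ]
    (hspan : Submodule.span K (MulAction.fixedPoints (K ≃ₐ[k] K) D.GlobalSections) = ⊤) :
    ∃ X : (Spec (CommRingCat.of D.invariantSections)).Opens,
      Y.toSpecΓ.opensRange = Spec.map D.invariantSectionsι ⁻¹ᵁ X := by
  obtain ⟨X, hX⟩ := exists_opens_comap_eq_of_vanishingIdeal_le _ Y.toSpecΓ.opensRange
    (le_map_comap_fixedPoints_subalgebra (B := D.GlobalSections) k hspan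
      fun σ f hf ↦ appTop_mem_vanishingIdeal_compl_range (D.act σ⁻¹) hf)
  exact ⟨X, TopologicalSpace.Opens.ext hX⟩

theorem act_hom_comp_eq_of_comp_ι_eq {X : (Spec (CommRingCat.of D.invariantSections)).Opens}
    {r : Y ⟶ X} (hr : r ≫ X.ι = Y.toSpecΓ ≫ Spec.map D.invariantSectionsι) (σ : K ≃ₐ[k] K) :
    (D.act σ : Aut Y).hom ≫ r = r := by
  rw [← cancel_mono X.ι, Category.assoc, hr, Scheme.toSpecΓ_naturality_assoc, ← Spec.map_comp,
    invariantSectionsι_comp_appTop]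

end DescentDatum

end QuasiAffineDescent

/-- Weil descent for quasi-affine schemes: a continuous descent datum with
respect to `K/k` on an integral quasi-affine scheme over `K` is effective, and the descended
scheme may be taken quasi-affine of finite type over `k`. -/
theorem weil_descent_quasiAffine
    (k K : Type) [Field k] [CharZero k] [Field K] [IsAlgClosed K] [Algebra k K]
    -- `K` has infinite transcendence degree over `k`
    (htr : ∀ L : IntermediateField k K, L.FG → ∃ x : K, Transcendental L x)
    (Y : Scheme) [IsIntegral Y] (p : Y ⟶ Spec (CommRingCat.of K))
    -- `Y` is quasi-affine over `K`
    (hqa : QuasiAffineOver K p)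
    -- a continuous descent datum on `Y` with respect to `K/k`
    (D : DescentDatum k K Y p) (hcont : D.IsContinuous) :
    ∃ (X : Scheme) (q : X ⟶ Spec (CommRingCat.of k)) (e : Y ≅ baseChange k K q),
      -- the isomorphism is over `Spec K`
      e.hom ≫ pullback.snd q (Spec.map (CommRingCat.ofHom (algebraMap k K))) = p ∧
      -- the action of each `σ` corresponds to `id_X × Spec (σ⁻¹)`
      (∀ σ : K ≃ₐ[k] K, (D.act σ).hom ≫ e.hom = e.hom ≫ baseChangeAut k K q σ) ∧
      -- `X` is quasi-affine of finite type over `k`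
      QuasiAffineOver k q := by
  obtain ⟨_, _, Z, _, j, _, _, -⟩ := hqa
  have : CompactSpace Y := QuasiCompact.compactSpace_of_compactSpace p
  have : Y.IsQuasiAffine := .of_isImmersion j
  have hK := aleph0_le_trdeg htr
  have hspan := D.span_fixedPoints_globalSections_eq_top hK hcont
  obtain ⟨X, hX⟩ := D.exists_opensRange_toSpecΓ_eq_preimage hspan
  obtain ⟨r, hrX, hr⟩ :=
    exists_isPullback_opens_of_isPushout (D.isPushout_invariantSectionsι hK hspan) hX
  exact ⟨X, _, hr.isoPullback, hr.isoPullback_hom_snd, fun σ ↦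
    comp_isoPullback_hom_eq_baseChangeAut hr (D.act_hom_comp_eq_of_comp_ι_eq hrX σ) (D.compat σ),
    quasiAffineOver_of_isPullback hr⟩

end Paper
end
end
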